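/- Let w be in B_n, a := w(1), 1 ≤ p ≤ n, and let b be an element of {a, -a} ∪ {±w(q) : p < q ≤ n} with a ⪯ b (in the order ≺). Then, in Z[t], the sum over all increasing-admissible subsequences T of Delta with (wT)(1) = b of t^{(l(wT) - l(w) - |T|)/2} (1-t)^{|T|} equals t^{N_{ab}(w[2,p])} (1-t)^{1 - delta_{ab}}, where delta_{ab} is the Kronecker delta. -/

import Mathlib

/-!
The sum over increasing-admissible subsequences `T` of `Δ` satisfies a recursion (`pathSum`) along
`Δ`: the first reflection `t` is either skipped or, if `l(w) < l(wt)`, applied, the latter branch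
carrying the weight `(1 - X) * X ^ ((l(wt) - l(w) - 1) / 2)`. The comparison of the sum over index
sets with this recursion is `finsum_eq_pathSum`.

Every reflection in `Δ` moves the first letter, and it increases the length exactly when the first
letter goes up in `≺`. The exponents are given by `len_swp`, `len_nswp`, `len_ngt`, as numbers of
letters of `w` lying between the old and the new first letter (plus sign corrections). Hence the
first letter is monotone along an admissible subsequence: targets below `w(1)` are never reached
(`pathSum_eq_zero`), and the target `w(1)` is reached only by the empty subsequence
(`pathSum_self`).

For the target `b` with `a = w(1) ≺ b`, every suffix of `Δ` has a sum of the form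
`(1 - X) * X ^ E`, with `E` an explicit count of letters between `a` and `b`: `pathSum_neg` for the
suffixes starting with `(1, -s)`, `pathSum_bar1` for the one starting with `(1, -1)`, and
`pathSum_pos` for those starting with `(1, s)`, of which `Δ` itself is one. Each is proved by
induction on the length of the suffix. If the first reflection replaces `a` by a letter `y` with
`a ≺ y ≺ b`, then skipping it gives exponent `E + 1`, applying it gives total exponent `E` with
an extra factor `1 - X`, because the letters between `a` and `b` are those between `a` and `y`
together with those between `y` and `b`; and `X + (1 - X) = 1` (`telescope`). Otherwise only one of
the two branches contributes.
-/

open scoped BigOperators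

namespace HL

/-! ### The order `≺` on nonzero integers in `[-n,n]`:
`1 ≺ 2 ≺ ... ≺ n ≺ -n ≺ -(n-1) ≺ ... ≺ -1`. -/

def slt (a b : ℤ) : Prop :=
  (0 < a ∧ b < 0) ∨ (0 < a ∧ 0 < b ∧ a < b) ∨ (a < 0 ∧ b < 0 ∧ a < b)

instance slt.dec (a b : ℤ) : Decidable (slt a b) := by unfold slt; infer_instance

def sle (a b : ℤ) : Prop := slt a b ∨ a = b

instance sle.dec (a b : ℤ) : Decidable (sle a b) := by unfold sle; infer_instance

/-! ### Signed permutations (windows), reflections acting on the right -/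

/-- The right action of a reflection on a window (or column), with 1-based
positions.  The reflection `(i, j)` with `j > 0` transposes positions `i` and
`j`; the reflection `(i, -j)` (i.e. `(i,\bar\jmath)`) with `i ≠ j` transposes
positions `i, j` and negates both entries; `(i, -i)` negates position `i`. -/
def applyRefl (l : List ℤ) (t : ℕ × ℤ) : List ℤ :=
  if 0 < t.2 then
    (l.set (t.1 - 1) (l.getD (t.2.toNat - 1) 0)).set (t.2.toNat - 1) (l.getD (t.1 - 1) 0)
  else
    if t.1 = (-t.2).toNat then l.set (t.1 - 1) (-(l.getD (t.1 - 1) 0))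
    else (l.set (t.1 - 1) (-(l.getD ((-t.2).toNat - 1) 0))).set ((-t.2).toNat - 1)
          (-(l.getD (t.1 - 1) 0))

def applyAll (w : List ℤ) (T : List (ℕ × ℤ)) : List ℤ := T.foldl applyRefl w

/-- The word `w[i,j] = w(i) w(i+1) ... w(j)`, 1-based and inclusive. -/
def word (l : List ℤ) (i j : ℕ) : List ℤ := (l.drop (i - 1)).take (j + 1 - i)

/-- `N_{ab}(u)` = number of letters `c` of the word `u` with `a ≺ c ≺ b`. -/
def Nab (a b : ℤ) (u : List ℤ) : ℕ :=
  (u.filter (fun c => decide (slt a c ∧ slt c b))).length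

/-- `ℓ₊(w) = #{(k,l) : k < l, w(k) ≻ w(l)}`. -/
def lplus (l : List ℤ) : ℕ :=
  (((Finset.range l.length) ×ˢ (Finset.range l.length)).filter
    (fun p => p.1 < p.2 ∧ slt (l.getD p.2 0) (l.getD p.1 0))).card

/-- `ℓ₋(w) = #{(k,l) : k ≤ l, w(k) ≻ -w(l)}`. -/
def lminus (l : List ℤ) : ℕ :=
  (((Finset.range l.length) ×ˢ (Finset.range l.length)).filter
    (fun p => p.1 ≤ p.2 ∧ slt (-(l.getD p.2 0)) (l.getD p.1 0))).card

/-- The Coxeter length of a signed permutation given by its window. -/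
def len (l : List ℤ) : ℕ := lplus l + lminus l

/-- The (finite) set of windows of all signed permutations in `B_n`. -/
def allWindows (n : ℕ) : Finset (List ℤ) :=
  Finset.image (fun w : Equiv.Perm (Fin n) × (Fin n → Bool) =>
    (List.finRange n).map (fun i =>
      if w.2 i then -(((w.1 i : ℕ) : ℤ) + 1) else ((w.1 i : ℕ) : ℤ) + 1)) Finset.univ

/-- `w`-admissibility of a sequence of reflections: a strictly decreasing
chain in Bruhat order (recorded via the length function). -/
def decChain : List ℤ → List (ℕ × ℤ) → Bool
  | _, [] => true
  | w, t :: ts => (decide (len (applyRefl w t) < len w)) && decChain (applyRefl w t) ts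

/-- Increasing-admissibility: a strictly increasing chain. -/
def incChain : List ℤ → List (ℕ × ℤ) → Bool
  | _, [] => true
  | w, t :: ts => (decide (len w < len (applyRefl w t))) && incChain (applyRefl w t) ts

/-- The subsequence of a chain `Γ` selected by a set `J` of (0-based) positions. -/
def selChain (Γ : List (ℕ × ℤ)) (J : Finset ℕ) : List (ℕ × ℤ) :=
  (J.sort (· ≤ ·)).map (fun j => Γ.getD j (0, 0))

/-! ### The `λ`-chain of type `C_n` -/

/-- `Γ'_j = ((1,-j),(2,-j),...,(j-1,-j))`. -/
def gammaPrime (j : ℕ) : List (ℕ × ℤ) := (List.range (j - 1)).map (fun r => (r + 1, -(j : ℤ)))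

/-- `Γ_j(k) = ((1,-j),...,(j-1,-j),(j,-(k+1)),...,(j,-n),(j,-j),(j,n),...,(j,k+1))`. -/
def gammaJK (n j k : ℕ) : List (ℕ × ℤ) :=
  gammaPrime j
    ++ (List.range (n - k)).map (fun r => (j, -((k + 1 + r : ℕ) : ℤ)))
    ++ [(j, -(j : ℤ))]
    ++ (List.range (n - k)).map (fun r => (j, ((n - r : ℕ) : ℤ)))

/-- `Γ(k) = Γ'_2 ⋯ Γ'_k Γ_1(k) ⋯ Γ_k(k)` (type `C_n`). -/
def gammaChain (n k : ℕ) : List (ℕ × ℤ) :=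
  ((List.range (k - 1)).map (fun r => gammaPrime (r + 2))).flatten
    ++ ((List.range k).map (fun r => gammaJK n (r + 1) k)).flatten

/-- `λ'_i = #{j : λ_j ≥ i}`, the conjugate partition. -/
def conj (n : ℕ) (lam : Fin n → ℕ) (i : ℕ) : ℕ :=
  (Finset.univ.filter (fun j : Fin n => i ≤ lam j)).card

/-- `λ_1`, the largest part. -/
def lamOne (n : ℕ) (lam : Fin n → ℕ) : ℕ := Finset.univ.sup lam

/-- The fixed `λ`-chain `Γ = Γ^{λ_1} Γ^{λ_1-1} ⋯ Γ^1` with `Γ^i = Γ(λ'_i)`. -/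
def lambdaChain (n : ℕ) (lam : Fin n → ℕ) : List (ℕ × ℤ) :=
  ((List.range (lamOne n lam)).map
    (fun r => gammaChain n (conj n lam (lamOne n lam - r)))).flatten

/-- The set `A(λ)` of admissible pairs `(w, J)`. -/
def ASet (n : ℕ) (lam : Fin n → ℕ) : Set (List ℤ × Finset ℕ) :=
  {p | p.1 ∈ allWindows n ∧ p.2 ⊆ Finset.range (lambdaChain n lam).length ∧
    decChain p.1 (selChain (lambdaChain n lam) p.2) = true}

/-! ### Roots, coroots, affine reflections, and the weight `μ(T)` -/

/-- The root of type `C_n` corresponding to a symbol: `(i,j) ↦ ε_i - ε_j`,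
`(i,-j) ↦ ε_i + ε_j` for `i < j`, and `(i,-i) ↦ 2ε_i`. -/
def rootVec (n : ℕ) (β : ℕ × ℤ) : Fin n → ℤ := fun r =>
  (if ((r : ℕ) + 1 : ℤ) = (β.1 : ℤ) then 1 else 0) +
  (if 0 < β.2 then (if ((r : ℕ) + 1 : ℤ) = β.2 then -1 else 0)
   else (if ((r : ℕ) + 1 : ℤ) = -β.2 then 1 else 0))

/-- The coroot (type `C_n`): `(2ε_i)^∨ = ε_i`, the long rootss are unchanged. -/
def corootVec (n : ℕ) (β : ℕ × ℤ) : Fin n → ℤ :=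
  if β.2 = -(β.1 : ℤ) then (fun r => if ((r : ℕ) + 1 : ℤ) = (β.1 : ℤ) then 1 else 0)
  else rootVec n β

/-- Standard inner product on `ℤ^n`. -/
def ip (n : ℕ) (u v : Fin n → ℤ) : ℤ := ∑ r, u r * v r

/-- The affine reflection in the hyperplane `{v : ⟨v, β^∨⟩ = c}`. -/
def affRefl (n : ℕ) (β : ℕ × ℤ) (c : ℤ) (v : Fin n → ℤ) : Fin n → ℤ :=
  fun r => v r - (ip n v (corootVec n β) - c) * rootVec n β r

/-- `l_k = #{j ≤ k : β_j = β_k}` (here `k` is 0-based). -/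
def lCount (Γ : List (ℕ × ℤ)) (k : ℕ) : ℕ := (Γ.take (k + 1)).count (Γ.getD k (0, 0))

/-- `μ(J) = \hat r_{j_1} ⋯ \hat r_{j_s}(λ)` for `J = {j_1 < ... < j_s}`. -/
def muJ (n : ℕ) (Γ : List (ℕ × ℤ)) (lamVec : Fin n → ℤ) (J : Finset ℕ) : Fin n → ℤ :=
  (J.sort (· ≤ ·)).foldr (fun j v => affRefl n (Γ.getD j (0, 0)) ((lCount Γ j : ℕ) : ℤ) v) lamVec

/-- The linear action of a signed permutation (given by its window) on `ℤ^n`: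
`w(ε_i) = ε_{w(i)}` with `ε_{-i} = -ε_i`. -/
def wAct (n : ℕ) (w : List ℤ) (v : Fin n → ℤ) : Fin n → ℤ := fun r =>
  ∑ i : Fin n, ((if w.getD i 0 = ((r : ℕ) + 1 : ℤ) then v i else 0) +
    (if w.getD i 0 = -(((r : ℕ) + 1 : ℤ)) then -(v i) else 0))

def lamVec (n : ℕ) (lam : Fin n → ℕ) : Fin n → ℤ := fun i => (lam i : ℤ)

/-! ### Fillings of the doubled shape `\hat λ` -/

/-- A filling of the doubled shape, recorded by its primed columns `C'_{i,k}`
(`Cp i k`) and unprimed columns `C_{i,j}` (`Cu i j`). -/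
structure Filling where
  Cp : ℕ → ℕ → List ℤ
  Cu : ℕ → ℕ → List ℤ

def validP (n : ℕ) (lam : Fin n → ℕ) (i k : ℕ) : Prop :=
  1 ≤ i ∧ i ≤ lamOne n lam ∧ 2 ≤ k ∧ k ≤ conj n lam i

def validU (n : ℕ) (lam : Fin n → ℕ) (i j : ℕ) : Prop :=
  1 ≤ i ∧ i ≤ lamOne n lam ∧ 1 ≤ j ∧ j ≤ conj n lam i ∧ (i = 1 → j = 1)

instance validP.dec (n : ℕ) (lam : Fin n → ℕ) (i k : ℕ) : Decidable (validP n lam i k) := by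
  unfold validP; infer_instance

instance validU.dec (n : ℕ) (lam : Fin n → ℕ) (i j : ℕ) : Decidable (validU n lam i j) := by
  unfold validU; infer_instance

/-- The right neighbour `C'_{i,k+1}` of `C'_{i,k}`, with the convention
`C'_{i,λ'_i+1} = C_{i,1}`. -/
def CpNxt (n : ℕ) (lam : Fin n → ℕ) (F : Filling) (i k : ℕ) : List ℤ :=
  if k < conj n lam i then F.Cp i (k + 1) else F.Cu i 1

/-- The right neighbour `C_{i,j+1}` of `C_{i,j}`, with the conventions
`C_{i,λ'_i+1} = C'_{i-1,2}` (if `λ'_{i-1} > 1`) and `C_{i,λ'_i+1} = C_{i-1,1}`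
(if `λ'_{i-1} = 1`). -/
def CuNxt (n : ℕ) (lam : Fin n → ℕ) (F : Filling) (i j : ℕ) : List ℤ :=
  if j < conj n lam i then F.Cu i (j + 1)
  else if 2 ≤ conj n lam (i - 1) then F.Cp (i - 1) 2 else F.Cu (i - 1) 1

/-- No two entries `a, b` of a column with `a = ±b`. -/
def colDistinct (c : List ℤ) : Prop :=
  ∀ p q : ℕ, p < q → q < c.length →
    c.getD p 0 ≠ c.getD q 0 ∧ c.getD p 0 ≠ -(c.getD q 0)

/-- `R = (r_1 < r_2 < ... < r_p)` with `1 ≤ r_t < j ≤ d`. -/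
def sortedR (R : List ℕ) (j d : ℕ) : Prop :=
  List.Chain' (· < ·) R ∧ (∀ r ∈ R, 1 ≤ r ∧ r < j) ∧ 1 ≤ j ∧ j ≤ d

/-- `D (r_1,-j) (r_2,-j) ⋯ (r_p,-j)`. -/
def cycleApply (D : List ℤ) (R : List ℕ) (j : ℕ) : List ℤ :=
  R.foldl (fun E r => applyRefl E (r, -(j : ℤ))) D

/-- The relation between `C_{i,j+1}[1,λ'_i] = E` and `C_{i,j} = D` in a filling:
`E` differs from `D' = D(r_1,-j)⋯(r_p,-j)` only in position `j`,
`E(j) ∉ {±D'(r) : r ≠ j}` and `E(j) ⪯ D'(j)`. -/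
def unprimedTrans (D E : List ℤ) (R : List ℕ) (j d : ℕ) : Prop :=
  (∀ r, 1 ≤ r → r ≤ d → r ≠ j →
    E.getD (r - 1) 0 = (cycleApply D R j).getD (r - 1) 0) ∧
  (∀ r, 1 ≤ r → r ≤ d → r ≠ j →
    E.getD (j - 1) 0 ≠ (cycleApply D R j).getD (r - 1) 0 ∧
    E.getD (j - 1) 0 ≠ -((cycleApply D R j).getD (r - 1) 0)) ∧
  sle (E.getD (j - 1) 0) ((cycleApply D R j).getD (j - 1) 0)

/-- The set `F(λ)` of fillings of the doubled shape `\hat λ`. -/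
def FSet (n : ℕ) (lam : Fin n → ℕ) : Set Filling :=
  {F |
    -- shape
    (∀ i k, (validP n lam i k → (F.Cp i k).length = conj n lam i) ∧
      (¬ validP n lam i k → F.Cp i k = [])) ∧
    (∀ i j, (validU n lam i j → (F.Cu i j).length = conj n lam i) ∧
      (¬ validU n lam i j → F.Cu i j = [])) ∧
    -- entries lie in `{±1, ..., ±n}`
    (∀ i k, validP n lam i k → ∀ a ∈ F.Cp i k, 1 ≤ a.natAbs ∧ a.natAbs ≤ n) ∧
    (∀ i j, validU n lam i j → ∀ a ∈ F.Cu i j, 1 ≤ a.natAbs ∧ a.natAbs ≤ n) ∧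
    -- (1) rows weakly decrease from left to right
    (∀ i k, validP n lam i k → ∀ r, 1 ≤ r → r ≤ conj n lam i →
      sle ((CpNxt n lam F i k).getD (r - 1) 0) ((F.Cp i k).getD (r - 1) 0)) ∧
    (∀ i j, 2 ≤ i → validU n lam i j → ∀ r, 1 ≤ r → r ≤ conj n lam i →
      sle ((CuNxt n lam F i j).getD (r - 1) 0) ((F.Cu i j).getD (r - 1) 0)) ∧
    -- (2) no column contains `a, b` with `a = ±b`
    (∀ i k, validP n lam i k → colDistinct (F.Cp i k)) ∧
    (∀ i j, validU n lam i j → colDistinct (F.Cu i j)) ∧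
    -- (3) primed transitions: `C'_{i,k+1} = C'_{i,k}(r_1,-k)⋯(r_p,-k)`
    (∀ i k, validP n lam i k → ∃ R : List ℕ, sortedR R k (conj n lam i) ∧
      CpNxt n lam F i k = cycleApply (F.Cp i k) R k) ∧
    -- (3) unprimed transitions
    (∀ i j, 2 ≤ i → validU n lam i j → ∃ R : List ℕ, sortedR R j (conj n lam i) ∧
      unprimedTrans (F.Cu i j) ((CuNxt n lam F i j).take (conj n lam i)) R j (conj n lam i))}

/-! ### The filling map `f` -/

/-- Offset in `Γ` of the beginning of block `Γ^i` (the blocks are listed for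
`i = λ_1` down to `1`). -/
def offsetBlock (n : ℕ) (lam : Fin n → ℕ) (i : ℕ) : ℕ :=
  ∑ r ∈ Finset.Ico (i + 1) (lamOne n lam + 1), (gammaChain n (conj n lam r)).length

/-- Offset in `Γ` of the beginning of the factor `Γ'_{i,k}`.-/
def offsetP (n : ℕ) (lam : Fin n → ℕ) (i k : ℕ) : ℕ :=
  offsetBlock n lam i + ∑ j ∈ Finset.Ico 2 k, (gammaPrime j).length

/-- Offset in `Γ` of the beginning of the factor `Γ_{i,j}`.-/
def offsetU (n : ℕ) (lam : Fin n → ℕ) (i j : ℕ) : ℕ :=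
  offsetBlock n lam i + (∑ k ∈ Finset.Ico 2 (conj n lam i + 1), (gammaPrime k).length)
    + ∑ j' ∈ Finset.Ico 1 j, (gammaJK n j' (conj n lam i)).length

/-- `π = w ⋅ (all selected reflections at positions < off)`. -/
def piW (n : ℕ) (lam : Fin n → ℕ) (w : List ℤ) (J : Finset ℕ) (off : ℕ) : List ℤ :=
  applyAll w (selChain (lambdaChain n lam) (J.filter (fun x => x < off)))

/-- The filling map `f`, sending an (admissible) pair `(w, J)` to a filling of
the doubled shape `\hat λ`. -/
def fMap (n : ℕ) (lam : Fin n → ℕ) (w : List ℤ) (J : Finset ℕ) : Filling where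
  Cp := fun i k => if validP n lam i k
    then (piW n lam w J (offsetP n lam i k)).take (conj n lam i) else []
  Cu := fun i j => if validU n lam i j
    then (piW n lam w J (offsetU n lam i j)).take (conj n lam i) else []

/-! ### Content of a filling -/

/-- The columns `\bar{C}^i = C'_{i,2} C_{i,1}` (left to right, `i = λ_1, ..., 1`)
of the compressed filling `\barσ` of shape `2λ`; by the conventions,
`C'_{i,2} = C_{i,1}` when `λ'_i = 1`. -/
def compCols (n : ℕ) (lam : Fin n → ℕ) (F : Filling) : List (List ℤ) :=
  ((List.range (lamOne n lam)).map (fun t =>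
    [(if 2 ≤ conj n lam (lamOne n lam - t) then F.Cp (lamOne n lam - t) 2
      else F.Cu (lamOne n lam - t) 1), F.Cu (lamOne n lam - t) 1])).flatten

/-- The content of a list of columns: the `i`-th coordinate is half the
difference between the numbers of occurrences of `i` and of `-i`. -/
def ctCols (n : ℕ) (cols : List (List ℤ)) : Fin n → ℚ := fun r =>
  ((cols.flatten.count (((r : ℕ) + 1 : ℕ) : ℤ) : ℚ) -
    (cols.flatten.count (-(((r : ℕ) + 1 : ℕ) : ℤ)) : ℚ)) / 2

/-- The content `ct(σ)` of a filling `σ` of `\hatλ`. -/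
def ctQ (n : ℕ) (lam : Fin n → ℕ) (F : Filling) : Fin n → ℚ :=
  ctCols n (compCols n lam F)

/-! ### The statistics `N(D,C)` and `des(D,C)` -/

/-- `σ_{ab} = 1` if `a` and `b` are both negative, else `0`. -/
def sigmaAB (a b : ℤ) : ℕ := if a < 0 ∧ b < 0 then 1 else 0

def allEntries (n : ℕ) : List ℤ :=
  (List.range n).map (fun r => ((r + 1 : ℕ) : ℤ)) ++
    (List.range n).map (fun r => -((r + 1 : ℕ) : ℤ))

/-- Case 1: `N(D, D(r,-j)) = N_{\bar b, a}(D[r+1,j-1]) +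
#{c : \bar b ≺ c ≺ a, c ∉ ±D[1,j]} + σ_{ab}` where `a = D(r)`, `b = D(j)`. -/
def N1 (n : ℕ) (D : List ℤ) (r j : ℕ) : ℕ :=
  Nab (-(D.getD (j - 1) 0)) (D.getD (r - 1) 0) (word D (r + 1) (j - 1)) +
  ((allEntries n).filter (fun c => decide (slt (-(D.getD (j - 1) 0)) c ∧
    slt c (D.getD (r - 1) 0) ∧ c ∉ D.take j ∧ c ∉ (D.take j).map (fun x => -x)))).length +
  sigmaAB (D.getD (r - 1) 0) (D.getD (j - 1) 0)

/-- Case 2: `N(D, D(r_1,-j)⋯(r_p,-j)) = ∑ N(D_{t-1}, D_t)`. -/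
def cycleN (n : ℕ) : List ℤ → List ℕ → ℕ → ℕ
  | _, [], _ => 0
  | D, r :: rs, j => N1 n D r j + cycleN n (applyRefl D (r, -(j : ℤ))) rs j

/-- The possible values `(N(D,C), des(D,C))` arising from the case-by-case
definition of the statistics (cases 0, 2, 3; case 1 is case 2 with `p = 1`).
If `C` is one box taller than `D`, `C` is replaced by `C[1,d]`. -/
def NdesCand (n : ℕ) (D C : List ℤ) : Set (ℕ × ℕ) :=
  {x |
    (C.take D.length = D ∧ x = (0, 0)) ∨
    (∃ j R, sortedR R j D.length ∧ R ≠ [] ∧ C.take D.length = cycleApply D R j ∧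
      x = (cycleN n D R j, R.length)) ∨
    (∃ j R, sortedR R j D.length ∧
      (∀ r, 1 ≤ r → r ≤ D.length → r ≠ j →
        (C.take D.length).getD (r - 1) 0 = (cycleApply D R j).getD (r - 1) 0) ∧
      (∀ r, 1 ≤ r → r ≤ D.length → r ≠ j →
        (C.take D.length).getD (j - 1) 0 ≠ (cycleApply D R j).getD (r - 1) 0 ∧
        (C.take D.length).getD (j - 1) 0 ≠ -((cycleApply D R j).getD (r - 1) 0)) ∧
      slt ((C.take D.length).getD (j - 1) 0) ((cycleApply D R j).getD (j - 1) 0) ∧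
      x = (cycleN n D R j +
        Nab ((C.take D.length).getD (j - 1) 0) ((cycleApply D R j).getD (j - 1) 0)
          (word D (j + 1) D.length), R.length + 1))}

noncomputable def Nstat (n : ℕ) (D C : List ℤ) : ℕ :=
  sInf {v | ∃ d, (v, d) ∈ NdesCand n D C}

noncomputable def desStat (n : ℕ) (D C : List ℤ) : ℕ :=
  sInf {d | ∃ v, (v, d) ∈ NdesCand n D C}

/-- All columns of a filling of `\hatλ`, listed from left to right. -/
def colList (n : ℕ) (lam : Fin n → ℕ) (F : Filling) : List (List ℤ) :=
  ((List.range (lamOne n lam)).map (fun t =>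
    ((List.range (conj n lam (lamOne n lam - t) - 1)).map
      (fun s => F.Cp (lamOne n lam - t) (s + 2))) ++
    (if lamOne n lam - t = 1 then [F.Cu 1 1]
     else (List.range (conj n lam (lamOne n lam - t))).map
      (fun s => F.Cu (lamOne n lam - t) (s + 1))))).flatten

/-- Sum of a binary statistic over adjacent pairs of a list. -/
def adjSumN (f : List ℤ → List ℤ → ℕ) : List (List ℤ) → ℕ
  | a :: b :: rest => f a b + adjSumN f (b :: rest)
  | _ => 0

/-- `N(σ) = ∑_{i=1}^{m-1} N(C_{i+1}, C_i) + ℓ₊(C_1)`. -/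
noncomputable def Nsigma (n : ℕ) (lam : Fin n → ℕ) (F : Filling) : ℕ :=
  adjSumN (Nstat n) (colList n lam F) + lplus ((colList n lam F).getLastD [])

/-- `des(σ) = ∑_{i=1}^{m-1} des(C_{i+1}, C_i)`. -/
noncomputable def desSigma (n : ℕ) (lam : Fin n → ℕ) (F : Filling) : ℕ :=
  adjSumN (desStat n) (colList n lam F)

/-! ### Statistics on fillings of the plain shape `λ` (for Proposition 2.2) -/

/-- The descent statistic of a filling of the Young diagram of `λ`, whose
columns are listed from left to right. -/
def desTau (cols : List (List ℤ)) : ℕ :=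
  adjSumN (fun L R => ((Finset.range L.length).filter
    (fun r => slt (R.getD r 0) (L.getD r 0))).card) cols

/-- The complementary inversion statistic `cinv = n(λ) - inv` of a filling of
the Young diagram of `λ` (columns listed from left to right, `C_k` being the
`k`-th column from the right). -/
def cinvTau (cols : List (List ℤ)) : ℕ :=
  ∑ q ∈ Finset.range cols.length,
    (((Finset.range (cols.getD q []).length) ×ˢ (Finset.range (cols.getD q []).length)).filter
      (fun pp => pp.1 < pp.2 ∧
        (((1 ≤ q ∧ pp.2 < (cols.getD (q - 1) []).length) ∧
            slt ((cols.getD q []).getD pp.2 0) ((cols.getD q []).getD pp.1 0) ∧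
            slt ((cols.getD q []).getD pp.1 0) ((cols.getD (q - 1) []).getD pp.2 0)) ∨
          (¬ (1 ≤ q ∧ pp.2 < (cols.getD (q - 1) []).length) ∧
            slt ((cols.getD q []).getD pp.2 0) ((cols.getD q []).getD pp.1 0))))).card

/-! ### Chains for the root systems `C_n` and `B_n` and the conditions (R1), (R2) -/

def isPosRootC (n : ℕ) (β : ℕ × ℤ) : Prop :=
  (1 ≤ β.1 ∧ (β.1 : ℤ) < β.2 ∧ β.2 ≤ (n : ℤ)) ∨
  (1 ≤ β.1 ∧ 0 < -β.2 ∧ (β.1 : ℤ) ≤ -β.2 ∧ -β.2 ≤ (n : ℤ))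

/-- Positive roots of `B_n` use the same symbols; `(i,-i)` encodes `ε_i`. -/
def isPosRootB (n : ℕ) (β : ℕ × ℤ) : Prop := isPosRootC n β

/-- The root of type `B_n` of a symbol: as in type `C` except `(i,-i) ↦ ε_i`. -/
def rootVecB (n : ℕ) (β : ℕ × ℤ) : Fin n → ℤ :=
  if β.2 = -(β.1 : ℤ) then (fun r => if ((r : ℕ) + 1 : ℤ) = (β.1 : ℤ) then 1 else 0)
  else rootVec n β

/-- The coroot of type `B_n`: `ε_i^∨ = 2ε_i`, long roots unchanged. -/
def corootVecB (n : ℕ) (β : ℕ × ℤ) : Fin n → ℤ :=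
  if β.2 = -(β.1 : ℤ) then (fun r => if ((r : ℕ) + 1 : ℤ) = (β.1 : ℤ) then 2 else 0)
  else rootVec n β

/-- `ω_k` in type `C_n`. -/
def omegaC (n k : ℕ) : Fin n → ℤ := fun r => if (r : ℕ) + 1 ≤ k then 1 else 0

/-- `ω_k` in type `B_n` (`ω_n` is half the sum of the `ε_i`). -/
def omegaB (n k : ℕ) : Fin n → ℚ :=
  if k = n then (fun _ => 1/2) else (fun r => if (r : ℕ) + 1 ≤ k then 1 else 0)

/-- type `B`: `Γ'_j = ((1,-j),...,(j-1,-j),(j))`. -/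
def gammaPrimeB (j : ℕ) : List (ℕ × ℤ) := gammaPrime j ++ [(j, -(j : ℤ))]

/-- type `B`: `Γ(k) = Γ'_1 ⋯ Γ'_k Γ_1(k) ⋯ Γ_k(k)` for `k < n`, and
`Γ(n) = Γ'_1 ⋯ Γ'_n`. -/
def gammaChainB (n k : ℕ) : List (ℕ × ℤ) :=
  ((List.range k).map (fun r => gammaPrimeB (r + 1))).flatten
    ++ (if k = n then [] else ((List.range k).map (fun r => gammaJK n (r + 1) k)).flatten)

/-- `(R2)`: the subsequence of all occurrences of `α, β, γ` is a concatenation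
of consecutive pairs `(γ, α)` or `(γ, β)`. -/
def altPairs (g a b : ℕ × ℤ) : List (ℕ × ℤ) → Prop
  | [] => True
  | [_] => False
  | x :: y :: rest => x = g ∧ (y = a ∨ y = b) ∧ altPairs g a b rest

/-! ### Real vector space versions (for hyperplanes) -/

def ipR (n : ℕ) (u v : Fin n → ℝ) : ℝ := ∑ r, u r * v r

def affReflR (n : ℕ) (β : ℕ × ℤ) (c : ℝ) (v : Fin n → ℝ) : Fin n → ℝ :=
  fun r => v r - (ipR n v (fun s => ((corootVec n β s : ℤ) : ℝ)) - c) *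
    ((rootVec n β r : ℤ) : ℝ)

def wActR (n : ℕ) (w : List ℤ) (v : Fin n → ℝ) : Fin n → ℝ := fun r =>
  ∑ i : Fin n, ((if w.getD i 0 = ((r : ℕ) + 1 : ℤ) then v i else 0) +
    (if w.getD i 0 = -(((r : ℕ) + 1 : ℤ)) then -(v i) else 0))

/-- `γ^∨ = (2/⟨γ,γ⟩) γ`. -/
noncomputable def corootOfR (n : ℕ) (v : Fin n → ℝ) : Fin n → ℝ :=
  fun r => (2 / ipR n v v) * v r

/-- The part of the compressed filling of shape `2λ` consisting of the columns
numbered `2λ_1, 2λ_1 - 1, ..., q` (`\barσ[q]`); column `2i` is `C'_{i,2}` and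
column `2i-1` is `C_{i,1}`. -/
def compColsGe (n : ℕ) (lam : Fin n → ℕ) (F : Filling) (q : ℕ) : List (List ℤ) :=
  ((List.range (lamOne n lam)).map (fun t =>
    (if q ≤ 2 * (lamOne n lam - t) then
      [(if 2 ≤ conj n lam (lamOne n lam - t) then F.Cp (lamOne n lam - t) 2
        else F.Cu (lamOne n lam - t) 1)] else []) ++
    (if q ≤ 2 * (lamOne n lam - t) - 1 then [F.Cu (lamOne n lam - t) 1] else []))).flatten

/-! ### The chains `Δ` and `Φ` of Section 6 -/

/-- `Δ = ((1,p+1),...,(1,n),(1,-1),(1,-n),(1,-(n-1)),...,(1,-(p+1)))`. -/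
def deltaChain (n p : ℕ) : List (ℕ × ℤ) :=
  (List.range (n - p)).map (fun r => (1, ((p + 1 + r : ℕ) : ℤ)))
    ++ [(1, (-1 : ℤ))]
    ++ (List.range (n - p)).map (fun r => (1, -((n - r : ℕ) : ℤ)))

/-- The suffix `Δ_{\bar s}` of `Δ` beginning with `(1,-s)`. -/
def deltaSuffixNeg (p s : ℕ) : List (ℕ × ℤ) :=
  (List.range (s - p)).map (fun r => (1, -((s - r : ℕ) : ℤ)))

/-- The suffix `Δ_{\bar 1}` of `Δ` beginning with `(1,-1)`. -/
def deltaSuffixBar1 (n p : ℕ) : List (ℕ × ℤ) :=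
  [(1, (-1 : ℤ))] ++ (List.range (n - p)).map (fun r => (1, -((n - r : ℕ) : ℤ)))

/-- The suffix `Δ_s` of `Δ` beginning with `(1,s)` (for `p < s ≤ n`). -/
def deltaSuffixPos (n p s : ℕ) : List (ℕ × ℤ) :=
  (List.range (n + 1 - s)).map (fun r => (1, ((s + r : ℕ) : ℤ)))
    ++ [(1, (-1 : ℤ))]
    ++ (List.range (n - p)).map (fun r => (1, -((n - r : ℕ) : ℤ)))

/-- `Φ = ((1,-1),(1,-2),(2,-2),...,(1,-n),...,(n-1,-n),(n,-n))`. -/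
def phiChain (n : ℕ) : List (ℕ × ℤ) :=
  ((List.range n).map (fun jm =>
    (List.range (jm + 1)).map (fun im => (im + 1, -((jm + 1 : ℕ) : ℤ))))).flatten

/-- The suffix `Φ_{ij}` of `Φ` beginning with `(i,-j)`. -/
def phiSuffix (n i j : ℕ) : List (ℕ × ℤ) := (phiChain n).drop ((j - 1) * j / 2 + (i - 1))

/-- `ℓ^{ij}_-(w) = #{(k,l) : k ≤ l, (k,-l)` strictly precedes `(i,-j)` in `Φ`,
`w(k) ≻ -w(l)}`. -/
def lminusBefore (w : List ℤ) (i j : ℕ) : ℕ :=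
  (((Finset.range w.length) ×ˢ (Finset.range w.length)).filter
    (fun p => p.1 ≤ p.2 ∧ (p.2 + 1 < j ∨ (p.2 + 1 = j ∧ p.1 + 1 < i)) ∧
      slt (-(w.getD p.2 0)) (w.getD p.1 0))).card

/-! ### The length as a sum over pairs of positions -/

/-- The letter of `w` in the 0-based position `i`. -/
def ltr (w : List ℤ) (i : ℕ) : ℤ := w.getD i 0

/-- `[a ≺ b]` as an integer. -/
def ind (a b : ℤ) : ℤ := if slt a b then 1 else 0

/-- `[a ≺ c ≺ b]`, the contribution of the letter `c` to `N_{ab}`. -/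
def btw (a b c : ℤ) : ℕ := if slt a c ∧ slt c b then 1 else 0

/-- `[a > 0 > b]`. -/
def sgn (a b : ℤ) : ℕ := if 0 < a ∧ b < 0 then 1 else 0

/-- The contribution to the length of letters `u`, `v` at two positions, `u` being on the left. -/
def pairLen (u v : ℤ) : ℤ := ind v u + ind (-v) u

/-- The contribution to the length of the ordered pair of positions `(k, l)`. -/
def cell (f : ℕ → ℤ) (k l : ℕ) : ℤ :=
  (if k < l ∧ slt (f l) (f k) then 1 else 0) + (if k ≤ l ∧ slt (-(f l)) (f k) then 1 else 0)

lemma len_eq_sum (w : List ℤ) :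
    (len w : ℤ) = ∑ k ∈ Finset.range w.length, ∑ l ∈ Finset.range w.length, cell (ltr w) k l := by
  unfold len lplus lminus cell
  rw [Finset.card_filter, Finset.card_filter, Finset.sum_product, Finset.sum_product]
  push_cast
  simp only [Finset.sum_add_distrib]
  rfl

lemma cell_of_lt (f : ℕ → ℤ) {k l : ℕ} (h : k < l) : cell f k l = pairLen (f k) (f l) := by
  simp [cell, pairLen, ind, h, h.le]

lemma cell_self (f : ℕ → ℤ) (k : ℕ) : cell f k k = ind (-(f k)) (f k) := by
  simp [cell, ind]

lemma cell_of_gt (f : ℕ → ℤ) {k l : ℕ} (h : l < k) : cell f k l = 0 := by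
  simp [cell, not_lt.2 h.le, not_le.2 h]

lemma sum_range_split {M : Type*} [AddCommMonoid M] (h : ℕ → M) {j n : ℕ} (hj : 1 ≤ j)
    (hjn : j < n) :
    ∑ k ∈ Finset.range n, h k =
      h 0 + (h j + (∑ k ∈ Finset.Ico 1 j, h k + ∑ k ∈ Finset.Ico (j + 1) n, h k)) := by
  rw [Finset.range_eq_Ico, ← Finset.sum_Ico_consecutive h (Nat.zero_le j) hjn.le,
    Finset.sum_eq_sum_Ico_succ_bot (by omega : 0 < j), Finset.sum_eq_sum_Ico_succ_bot hjn]
  simp only [zero_add]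
  abel

/-- The part of the length that involves the positions `0` or `j`. -/
def partLen (f : ℕ → ℤ) (j n : ℕ) : ℤ :=
  ind (-(f 0)) (f 0) + ind (-(f j)) (f j) + pairLen (f 0) (f j) +
    (∑ k ∈ Finset.Ico 1 j, (pairLen (f 0) (f k) + pairLen (f k) (f j)) +
      ∑ k ∈ Finset.Ico (j + 1) n, (pairLen (f 0) (f k) + pairLen (f j) (f k)))

/-- The part of the length that involves neither of the positions `0` and `j`. -/
def restLen (f : ℕ → ℤ) (j n : ℕ) : ℤ :=
  ∑ k ∈ Finset.Ico 1 j, (∑ l ∈ Finset.Ico 1 j, cell f k l + ∑ l ∈ Finset.Ico (j + 1) n, cell f k l)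
    + ∑ k ∈ Finset.Ico (j + 1) n,
      (∑ l ∈ Finset.Ico 1 j, cell f k l + ∑ l ∈ Finset.Ico (j + 1) n, cell f k l)

lemma len_split (f : ℕ → ℤ) {j n : ℕ} (hj : 1 ≤ j) (hjn : j < n) :
    ∑ k ∈ Finset.range n, ∑ l ∈ Finset.range n, cell f k l = partLen f j n + restLen f j n := by
  have e1 : ∀ k ∈ Finset.Ico 1 j, ∑ l ∈ Finset.range n, cell f k l =
      pairLen (f k) (f j) +
        (∑ l ∈ Finset.Ico 1 j, cell f k l + ∑ l ∈ Finset.Ico (j + 1) n, cell f k l) := by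
    intro k hk
    rw [Finset.mem_Ico] at hk
    rw [sum_range_split _ hj hjn, cell_of_gt f (by omega : 0 < k), cell_of_lt f hk.2, zero_add]
  have e2 : ∀ k ∈ Finset.Ico (j + 1) n, ∑ l ∈ Finset.range n, cell f k l =
      (∑ l ∈ Finset.Ico 1 j, cell f k l + ∑ l ∈ Finset.Ico (j + 1) n, cell f k l) := by
    intro k hk
    rw [Finset.mem_Ico] at hk
    rw [sum_range_split _ hj hjn, cell_of_gt f (by omega : 0 < k),
      cell_of_gt f (by omega : j < k), zero_add, zero_add]
  have e3 : ∑ l ∈ Finset.Ico 1 j, cell f 0 l = ∑ l ∈ Finset.Ico 1 j, pairLen (f 0) (f l) :=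
    Finset.sum_congr rfl fun l hl => cell_of_lt f (by rw [Finset.mem_Ico] at hl; omega)
  have e4 : ∑ l ∈ Finset.Ico (j + 1) n, cell f 0 l =
      ∑ l ∈ Finset.Ico (j + 1) n, pairLen (f 0) (f l) :=
    Finset.sum_congr rfl fun l hl => cell_of_lt f (by rw [Finset.mem_Ico] at hl; omega)
  have e5 : ∑ l ∈ Finset.Ico 1 j, cell f j l = 0 :=
    Finset.sum_eq_zero fun l hl => cell_of_gt f (by rw [Finset.mem_Ico] at hl; omega)
  have e6 : ∑ l ∈ Finset.Ico (j + 1) n, cell f j l =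
      ∑ l ∈ Finset.Ico (j + 1) n, pairLen (f j) (f l) :=
    Finset.sum_congr rfl fun l hl => cell_of_lt f (by rw [Finset.mem_Ico] at hl; omega)
  rw [sum_range_split _ hj hjn, Finset.sum_congr rfl e1, Finset.sum_congr rfl e2,
    sum_range_split _ hj hjn, sum_range_split _ hj hjn, e3, e4, e5, e6, cell_self, cell_self,
    cell_of_lt f (by omega : 0 < j), cell_of_gt f (by omega : 0 < j)]
  unfold partLen restLen
  simp only [Finset.sum_add_distrib]
  ring

lemma restLen_congr {f f' : ℕ → ℤ} {j n : ℕ} (h : ∀ k, k ≠ 0 → k ≠ j → f' k = f k) :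
    restLen f' j n = restLen f j n := by
  have hc : ∀ k l, k ≠ 0 → k ≠ j → l ≠ 0 → l ≠ j → cell f' k l = cell f k l := by
    intro k l h1 h2 h3 h4
    simp only [cell, h k h1 h2, h l h3 h4]
  unfold restLen
  refine congrArg₂ (· + ·) ?_ ?_ <;>
    refine Finset.sum_congr rfl fun k hk => congrArg₂ (· + ·) ?_ ?_ <;>
    refine Finset.sum_congr rfl fun l hl => hc k l ?_ ?_ ?_ ?_ <;>
    simp only [Finset.mem_Ico] at hk hl <;> omega

/-! ### Facts about letters -/

lemma slt_iff_neg {x y : ℤ} : slt (-x) y ↔ slt (-y) x := by unfold slt; omega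

lemma ind_neg (x y : ℤ) : ind (-x) y = ind (-y) x := by simp only [ind, slt_iff_neg]

lemma slt_trans {x y z : ℤ} (h : slt x y) (h' : slt y z) : slt x z := by
  unfold slt at *; omega

lemma slt_irrefl (x : ℤ) : ¬ slt x x := by unfold slt; omega

lemma slt_asymm {x y : ℤ} (h : slt x y) : ¬ slt y x := by unfold slt at *; omega

lemma slt_total {x y : ℤ} (hx : x ≠ 0) (hy : y ≠ 0) (h : x ≠ y) : slt x y ∨ slt y x := by
  unfold slt; omega

lemma ind_add {x y : ℤ} (hx : x ≠ 0) (hy : y ≠ 0) (h : x ≠ y) : ind x y + ind y x = 1 := by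
  unfold ind
  rcases slt_total hx hy h with h | h <;> simp [h, slt_asymm h]

/-- For `x ≺ b`, moving from `x` to `b` past the letter `c` changes the comparisons with `c`
by `2 [x ≺ c ≺ b]`. -/
lemma ind_jump {x b c : ℤ} (hx : x ≠ 0) (hb : b ≠ 0) (hc : c ≠ 0) (h : slt x b) (h1 : x ≠ c)
    (h2 : b ≠ c) : (ind c b - ind b c) + (ind x c - ind c x) = 2 * (btw x b c : ℤ) := by
  have e1 := ind_add hx hc h1
  have e2 := ind_add hb hc h2
  have e3 : (btw x b c : ℤ) = ind x c * ind c b := by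
    unfold btw ind; split_ifs <;> simp_all
  have e4 : ind x c = 1 ∨ ind c b = 1 := by
    unfold ind
    rcases slt_total hx hc h1 with h' | h'
    · left; simp [h']
    · right; simp [slt_trans h' h]
  rw [e3]
  rcases e4 with e | e <;> rw [e] <;> linarith

lemma btw_add {x y b c : ℤ} (hy : y ≠ 0) (hc : c ≠ 0) (h1 : slt x y) (h2 : slt y b) (hne : c ≠ y) :
    btw x b c = btw x y c + btw y b c := by
  unfold btw
  rcases slt_total hc hy hne with h | h
  · simp [h, slt_asymm h, slt_trans h h2]
  · simp [h, slt_asymm h, slt_trans h1 h]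

lemma sgn_add {x y b : ℤ} (h1 : slt x y) (h2 : slt y b) : sgn x b = sgn x y + sgn y b := by
  unfold sgn; unfold slt at h1 h2; split_ifs <;> omega

lemma slt_neg_self (x : ℤ) : slt x (-x) ↔ 0 < x := by unfold slt; omega

lemma neg_slt_self (x : ℤ) : slt (-x) x ↔ x < 0 := by unfold slt; omega

lemma ind_diag {x y : ℤ} (hx : x ≠ 0) (hy : y ≠ 0) (h : slt x (-y)) :
    ind y (-y) + ind x (-x) = ind (-x) x + ind (-y) y + 2 * (sgn x (-y) : ℤ) := by
  simp only [ind, slt_neg_self, neg_slt_self, sgn]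
  rcases lt_or_gt_of_ne hx with h1 | h1 <;> rcases lt_or_gt_of_ne hy with h2 | h2
  · exact absurd h (by unfold slt; omega)
  · simp [h1, h2, h1.not_gt, h2.not_gt]
  · simp [h1, h2, h1.not_gt, h2.not_gt]
  · simp [h1, h2, h1.not_gt, h2.not_gt]

/-! ### Reflections of words -/

/-- `w` has `n` letters, which are nonzero and have distinct absolute values. -/
def Good (n : ℕ) (w : List ℤ) : Prop :=
  w.length = n ∧ (∀ i < n, ltr w i ≠ 0) ∧
    ∀ i < n, ∀ j < n, i ≠ j → ltr w i ≠ ltr w j ∧ ltr w i ≠ -(ltr w j)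

/-- The reflection `(1, j+1)`: swap the letters in the 0-based positions `0` and `j`. -/
def swp (w : List ℤ) (j : ℕ) : List ℤ := applyRefl w (1, ((j + 1 : ℕ) : ℤ))

/-- The reflection `(1, -(j+1))`: swap and negate the letters in the 0-based positions `0`, `j`. -/
def nswp (w : List ℤ) (j : ℕ) : List ℤ := applyRefl w (1, -((j + 1 : ℕ) : ℤ))

/-- The reflection `(1, -1)`: negate the first letter. -/
def ngt (w : List ℤ) : List ℤ := applyRefl w (1, -1)

lemma swp_eq (w : List ℤ) (j : ℕ) : swp w j = (w.set 0 (ltr w j)).set j (ltr w 0) := by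
  unfold swp applyRefl
  rw [if_pos (by positivity)]
  simp [ltr]

lemma nswp_eq (w : List ℤ) {j : ℕ} (hj : 1 ≤ j) :
    nswp w j = (w.set 0 (-(ltr w j))).set j (-(ltr w 0)) := by
  unfold nswp applyRefl
  rw [if_neg (by simp), if_neg (by simp; omega)]
  simp [ltr]

lemma ngt_eq (w : List ℤ) : ngt w = w.set 0 (-(ltr w 0)) := by
  simp [ngt, applyRefl, ltr]

lemma ltr_set (w : List ℤ) {i : ℕ} (hi : i < w.length) (k : ℕ) (x : ℤ) :
    ltr (w.set i x) k = if k = i then x else ltr w k := by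
  simp only [ltr, List.getD_eq_getElem?_getD, List.getElem?_set]
  by_cases h : k = i
  · subst h; simp [hi]
  · simp [h, Ne.symm h]

section
variable {n : ℕ} {w : List ℤ} {j : ℕ}

lemma ltr_swp (hw : Good n w) (hj : 1 ≤ j) (hjn : j < n) (k : ℕ) :
    ltr (swp w j) k = if k = 0 then ltr w j else if k = j then ltr w 0 else ltr w k := by
  rw [swp_eq, ltr_set _ (by rw [List.length_set, hw.1]; exact hjn), ltr_set _ (by rw [hw.1]; omega)]
  split_ifs <;> first | rfl | omega

lemma ltr_nswp (hw : Good n w) (hj : 1 ≤ j) (hjn : j < n) (k : ℕ) :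
    ltr (nswp w j) k = if k = 0 then -(ltr w j) else if k = j then -(ltr w 0) else ltr w k := by
  rw [nswp_eq w hj, ltr_set _ (by rw [List.length_set, hw.1]; exact hjn),
    ltr_set _ (by rw [hw.1]; omega)]
  split_ifs <;> first | rfl | omega

lemma ltr_ngt (hw : Good n w) (hn : 0 < n) (k : ℕ) :
    ltr (ngt w) k = if k = 0 then -(ltr w 0) else ltr w k := by
  rw [ngt_eq, ltr_set _ (by rw [hw.1]; omega)]

lemma Good.swp (hw : Good n w) (hj : 1 ≤ j) (hjn : j < n) : Good n (swp w j) := by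
  refine ⟨by rw [swp_eq]; simpa using hw.1, fun i hi => ?_, fun i hi k hk hik => ?_⟩
  · rw [ltr_swp hw hj hjn]
    have := hw.2.1
    split_ifs <;> apply this <;> omega
  · rw [ltr_swp hw hj hjn, ltr_swp hw hj hjn]
    have := hw.2.2
    split_ifs <;> first | omega | (apply this <;> omega)

lemma Good.nswp (hw : Good n w) (hj : 1 ≤ j) (hjn : j < n) : Good n (nswp w j) := by
  refine ⟨by rw [nswp_eq w hj]; simpa using hw.1, fun i hi => ?_, fun i hi k hk hik => ?_⟩
  · rw [ltr_nswp hw hj hjn]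
    have h0 := hw.2.1 0 (by omega)
    have h1 := hw.2.1 j hjn
    have h2 := hw.2.1 i hi
    split_ifs <;> omega
  · rw [ltr_nswp hw hj hjn, ltr_nswp hw hj hjn]
    have h1 := hw.2.2 0 (by omega) j hjn (by omega)
    have h2 := hw.2.2 i hi k hk hik
    have h3 := hw.2.2 0 (by omega) k hk
    have h4 := hw.2.2 j hjn k hk
    have h5 := hw.2.2 0 (by omega) i hi
    have h6 := hw.2.2 j hjn i hi
    split_ifs <;> omega

lemma Good.ngt (hw : Good n w) (hn : 0 < n) : Good n (ngt w) := by
  refine ⟨by rw [ngt_eq]; simpa using hw.1, fun i hi => ?_, fun i hi k hk hik => ?_⟩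
  · rw [ltr_ngt hw hn]
    have h0 := hw.2.1 0 (by omega)
    have h2 := hw.2.1 i hi
    split_ifs <;> omega
  · rw [ltr_ngt hw hn, ltr_ngt hw hn]
    have h2 := hw.2.2 i hi k hk hik
    have h3 := hw.2.2 0 (by omega) k hk
    have h5 := hw.2.2 0 (by omega) i hi
    split_ifs <;> omega

lemma swp_swp (hw : Good n w) (hj : 1 ≤ j) (hjn : j < n) : swp (swp w j) j = w := by
  have h := hw.swp hj hjn
  have h' := h.swp hj hjn
  apply List.ext_getElem (by rw [h'.1, hw.1])
  intro k h1 h2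
  have := ltr_swp h hj hjn k
  simp only [ltr_swp hw hj hjn] at this
  rw [ltr, List.getD_eq_getElem _ _ h1, ltr, ltr, ltr, List.getD_eq_getElem w _ h2] at this
  rw [this]
  split_ifs <;> subst_vars <;> first | omega | simp_all

lemma nswp_nswp (hw : Good n w) (hj : 1 ≤ j) (hjn : j < n) : nswp (nswp w j) j = w := by
  have h := hw.nswp hj hjn
  have h' := h.nswp hj hjn
  apply List.ext_getElem (by rw [h'.1, hw.1])
  intro k h1 h2
  have := ltr_nswp h hj hjn k
  simp only [ltr_nswp hw hj hjn] at this
  rw [ltr, List.getD_eq_getElem _ _ h1, ltr, ltr, ltr, List.getD_eq_getElem w _ h2] at this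
  rw [this]
  split_ifs <;> subst_vars <;> first | omega | simp_all

lemma ngt_ngt (hw : Good n w) (hn : 0 < n) : ngt (ngt w) = w := by
  have h := hw.ngt hn
  have h' := h.ngt hn
  apply List.ext_getElem (by rw [h'.1, hw.1])
  intro k h1 h2
  have := ltr_ngt h hn k
  simp only [ltr_ngt hw hn] at this
  rw [ltr, List.getD_eq_getElem _ _ h1, ltr, ltr, List.getD_eq_getElem w _ h2] at this
  rw [this]
  split_ifs <;> subst_vars <;> first | omega | simp_all

/-! ### Length changes -/

lemma len_swp (hw : Good n w) (hj : 1 ≤ j) (hjn : j < n) (h : slt (ltr w 0) (ltr w j)) :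
    len (swp w j) = len w + 1 + 2 * ∑ k ∈ Finset.Ico 1 j, btw (ltr w 0) (ltr w j) (ltr w k) := by
  have g := ltr_swp hw hj hjn
  have g0 : ltr (swp w j) 0 = ltr w j := by simp [g]
  have gj : ltr (swp w j) j = ltr w 0 := by simp [g]; omega
  have gk : ∀ k, k ≠ 0 → k ≠ j → ltr (swp w j) k = ltr w k := fun k h1 h2 => by simp [g, h1, h2]
  have hr := restLen_congr (n := n) gk
  have key : (len (swp w j) : ℤ) - len w =
      1 + 2 * ∑ k ∈ Finset.Ico 1 j, (btw (ltr w 0) (ltr w j) (ltr w k) : ℤ) := by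
    rw [len_eq_sum, len_eq_sum, (hw.swp hj hjn).1, hw.1, len_split _ hj hjn, len_split _ hj hjn, hr]
    unfold partLen
    rw [g0, gj]
    have e1 : ∑ k ∈ Finset.Ico 1 j, (pairLen (ltr w j) (ltr (swp w j) k) +
          pairLen (ltr (swp w j) k) (ltr w 0)) =
        ∑ k ∈ Finset.Ico 1 j, (pairLen (ltr w 0) (ltr w k) + pairLen (ltr w k) (ltr w j)) +
          2 * ∑ k ∈ Finset.Ico 1 j, (btw (ltr w 0) (ltr w j) (ltr w k) : ℤ) := by
      rw [Finset.mul_sum, ← Finset.sum_add_distrib]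
      refine Finset.sum_congr rfl fun k hk => ?_
      rw [Finset.mem_Ico] at hk
      rw [gk k (by omega) (by omega), ← ind_jump (hw.2.1 0 (by omega)) (hw.2.1 j hjn)
        (hw.2.1 k (by omega)) h (hw.2.2 0 (by omega) k (by omega) (by omega)).1
        (hw.2.2 j hjn k (by omega) (by omega)).1]
      unfold pairLen
      rw [ind_neg (ltr w k) (ltr w j), ind_neg (ltr w k) (ltr w 0)]
      ring
    have e2 : ∑ k ∈ Finset.Ico (j + 1) n, (pairLen (ltr w j) (ltr (swp w j) k) +
          pairLen (ltr w 0) (ltr (swp w j) k)) =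
        ∑ k ∈ Finset.Ico (j + 1) n, (pairLen (ltr w 0) (ltr w k) + pairLen (ltr w j) (ltr w k)) := by
      refine Finset.sum_congr rfl fun k hk => ?_
      rw [Finset.mem_Ico] at hk
      rw [gk k (by omega) (by omega), add_comm]
    have e3 : pairLen (ltr w j) (ltr w 0) = pairLen (ltr w 0) (ltr w j) + 1 := by
      unfold pairLen
      rw [ind_neg (ltr w 0)]
      simp [ind, h, slt_asymm h]
      ring
    rw [e1, e2, e3]
    ring
  zify
  linarith

lemma len_nswp (hw : Good n w) (hj : 1 ≤ j) (hjn : j < n) (h : slt (ltr w 0) (-(ltr w j))) :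
    len (nswp w j) = len w + 1 + 2 * (sgn (ltr w 0) (-(ltr w j)) +
      ∑ k ∈ Finset.Ico 1 j, btw (ltr w 0) (-(ltr w j)) (ltr w k) +
      ∑ k ∈ Finset.Ico (j + 1) n,
        (btw (ltr w 0) (-(ltr w j)) (ltr w k) + btw (ltr w 0) (-(ltr w j)) (-(ltr w k)))) := by
  have g := ltr_nswp hw hj hjn
  have g0 : ltr (nswp w j) 0 = -(ltr w j) := by simp [g]
  have gj : ltr (nswp w j) j = -(ltr w 0) := by simp [g]; omega
  have gk : ∀ k, k ≠ 0 → k ≠ j → ltr (nswp w j) k = ltr w k := fun k h1 h2 => by simp [g, h1, h2]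
  have hr := restLen_congr (n := n) gk
  have hx := hw.2.1 0 (by omega)
  have hy := hw.2.1 j hjn
  have hy' : -(ltr w j) ≠ 0 := neg_ne_zero.2 hy
  have key : (len (nswp w j) : ℤ) - len w = 1 + 2 * (sgn (ltr w 0) (-(ltr w j)) +
      ∑ k ∈ Finset.Ico 1 j, (btw (ltr w 0) (-(ltr w j)) (ltr w k) : ℤ) +
      ∑ k ∈ Finset.Ico (j + 1) n,
        ((btw (ltr w 0) (-(ltr w j)) (ltr w k) : ℤ) + btw (ltr w 0) (-(ltr w j)) (-(ltr w k)))) := by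
    rw [len_eq_sum, len_eq_sum, (hw.nswp hj hjn).1, hw.1, len_split _ hj hjn, len_split _ hj hjn,
      hr]
    unfold partLen
    rw [g0, gj]
    have e1 : ∑ k ∈ Finset.Ico 1 j, (pairLen (-(ltr w j)) (ltr (nswp w j) k) +
          pairLen (ltr (nswp w j) k) (-(ltr w 0))) =
        ∑ k ∈ Finset.Ico 1 j, (pairLen (ltr w 0) (ltr w k) + pairLen (ltr w k) (ltr w j)) +
          2 * ∑ k ∈ Finset.Ico 1 j, (btw (ltr w 0) (-(ltr w j)) (ltr w k) : ℤ) := by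
      rw [Finset.mul_sum, ← Finset.sum_add_distrib]
      refine Finset.sum_congr rfl fun k hk => ?_
      rw [Finset.mem_Ico] at hk
      have d1 := hw.2.2 0 (by omega) k (by omega) (by omega)
      have d2 := hw.2.2 j hjn k (by omega) (by omega)
      rw [gk k (by omega) (by omega), ← ind_jump hx hy'
        (hw.2.1 k (by omega)) h d1.1 (by omega)]
      unfold pairLen
      rw [ind_neg (ltr w k) (-(ltr w j)), ind_neg (ltr w k) (ltr w 0), neg_neg, neg_neg]
      ring
    have e2 : ∑ k ∈ Finset.Ico (j + 1) n, (pairLen (-(ltr w j)) (ltr (nswp w j) k) +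
          pairLen (-(ltr w 0)) (ltr (nswp w j) k)) =
        ∑ k ∈ Finset.Ico (j + 1) n, (pairLen (ltr w 0) (ltr w k) + pairLen (ltr w j) (ltr w k)) +
          2 * ∑ k ∈ Finset.Ico (j + 1) n,
        ((btw (ltr w 0) (-(ltr w j)) (ltr w k) : ℤ) + btw (ltr w 0) (-(ltr w j)) (-(ltr w k))) := by
      rw [Finset.mul_sum, ← Finset.sum_add_distrib]
      refine Finset.sum_congr rfl fun k hk => ?_
      rw [Finset.mem_Ico] at hk
      have d1 := hw.2.2 0 (by omega) k (by omega) (by omega)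
      have d2 := hw.2.2 j hjn k (by omega) (by omega)
      have hk0 := hw.2.1 k (by omega)
      rw [gk k (by omega) (by omega), mul_add, ← ind_jump hx hy' hk0 h d1.1 (by omega),
        ← ind_jump hx hy' (neg_ne_zero.2 hk0) h d1.2 (by omega)]
      unfold pairLen
      have i1 := ind_neg (ltr w j) (-(ltr w k))
      have i2 := ind_neg (ltr w 0) (-(ltr w k))
      have i3 := ind_neg (ltr w j) (ltr w k)
      have i4 := ind_neg (ltr w 0) (ltr w k)
      have i5 := ind_neg (-(ltr w 0)) (ltr w k)
      have i6 := ind_neg (-(ltr w j)) (ltr w k)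
      have i7 := ind_neg (-(ltr w k)) (-(ltr w 0))
      have i8 := ind_neg (-(ltr w k)) (-(ltr w j))
      simp only [neg_neg] at i1 i2 i3 i4 i5 i6 i7 i8
      linarith
    have e3 : ind (- -(ltr w j)) (-(ltr w j)) + ind (- -(ltr w 0)) (-(ltr w 0)) +
        pairLen (-(ltr w j)) (-(ltr w 0)) =
        ind (-(ltr w 0)) (ltr w 0) + ind (-(ltr w j)) (ltr w j) + pairLen (ltr w 0) (ltr w j) + 1
          + 2 * sgn (ltr w 0) (-(ltr w j)) := by
      clear * - h hx hy
      generalize ltr w 0 = x at *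
      generalize ltr w j = y at *
      unfold pairLen
      simp only [neg_neg]
      have i1 := ind_neg (-y) (-x)
      have i2 := ind_neg (-x) (-y)
      simp only [neg_neg] at i1 i2
      have i3 : ind x (-y) = 1 := by simp [ind, h]
      have i4 : ind (-y) x = 0 := by simp [ind, slt_asymm h]
      have i5 : ind y (-y) + ind x (-x) = ind (-x) x + ind (-y) y + 2 * (sgn x (-y) : ℤ) :=
        ind_diag hx hy h
      have i6 : ind (-x) (-y) = ind y x := by rw [ind_neg]; simp
      linarith
    rw [e1, e2, e3]
    ring
  zify
  linarith

lemma len_ngt (hw : Good n w) (hn : 0 < n) (h : 0 < ltr w 0) :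
    len (ngt w) = len w + 1 + 2 * ∑ k ∈ Finset.Ico 1 n, btw (ltr w 0) (-(ltr w 0)) (ltr w k) := by
  have g := ltr_ngt hw hn
  have g0 : ltr (ngt w) 0 = -(ltr w 0) := by simp [g]
  have gk : ∀ k, k ≠ 0 → ltr (ngt w) k = ltr w k := fun k h1 => by simp [g, h1]
  have hs : slt (ltr w 0) (-(ltr w 0)) := (slt_neg_self _).2 h
  have hx := hw.2.1 0 hn
  have split : ∀ f : ℕ → ℤ, ∑ k ∈ Finset.range n, ∑ l ∈ Finset.range n, cell f k l =
      ind (-(f 0)) (f 0) + ∑ k ∈ Finset.Ico 1 n, pairLen (f 0) (f k) +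
        ∑ k ∈ Finset.Ico 1 n, ∑ l ∈ Finset.range n, cell f k l := by
    intro f
    rw [Finset.range_eq_Ico, Finset.sum_eq_sum_Ico_succ_bot hn, Finset.sum_eq_sum_Ico_succ_bot hn,
      cell_self]
    congr 2
    refine Finset.sum_congr rfl fun k hk => cell_of_lt f ?_
    rw [Finset.mem_Ico] at hk
    omega
  have key : (len (ngt w) : ℤ) - len w =
      1 + 2 * ∑ k ∈ Finset.Ico 1 n, (btw (ltr w 0) (-(ltr w 0)) (ltr w k) : ℤ) := by
    rw [len_eq_sum, len_eq_sum, (hw.ngt hn).1, hw.1, split, split, g0]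
    have e1 : ∑ k ∈ Finset.Ico 1 n, pairLen (-(ltr w 0)) (ltr (ngt w) k) =
        ∑ k ∈ Finset.Ico 1 n, pairLen (ltr w 0) (ltr w k) +
          2 * ∑ k ∈ Finset.Ico 1 n, (btw (ltr w 0) (-(ltr w 0)) (ltr w k) : ℤ) := by
      rw [Finset.mul_sum, ← Finset.sum_add_distrib]
      refine Finset.sum_congr rfl fun k hk => ?_
      rw [Finset.mem_Ico] at hk
      have d1 := hw.2.2 0 hn k hk.2 (by omega)
      rw [gk k (by omega), ← ind_jump hx (neg_ne_zero.2 hx) (hw.2.1 k hk.2) hs d1.1 (by omega)]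
      unfold pairLen
      have i1 := ind_neg (ltr w k) (-(ltr w 0))
      have i2 := ind_neg (ltr w k) (ltr w 0)
      simp only [neg_neg] at i1 i2
      linarith
    have e2 : ∑ k ∈ Finset.Ico 1 n, ∑ l ∈ Finset.range n, cell (ltr (ngt w)) k l =
        ∑ k ∈ Finset.Ico 1 n, ∑ l ∈ Finset.range n, cell (ltr w) k l := by
      refine Finset.sum_congr rfl fun k hk => Finset.sum_congr rfl fun l _ => ?_
      rw [Finset.mem_Ico] at hk
      by_cases hl : l = 0
      · rw [cell_of_gt _ (by omega), cell_of_gt _ (by omega)]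
      · simp only [cell, gk k (by omega), gk l hl]
    have e3 : ind (- -(ltr w 0)) (-(ltr w 0)) = ind (-(ltr w 0)) (ltr w 0) + 1 := by
      rw [neg_neg]
      simp [ind, hs, slt_asymm hs]
    rw [e1, e2, e3]
    ring
  zify
  linarith

/-- The length goes up under `(1, j+1)` iff the first letter goes up. -/
lemma len_lt_swp_iff (hw : Good n w) (hj : 1 ≤ j) (hjn : j < n) :
    len w < len (swp w j) ↔ slt (ltr w 0) (ltr w j) := by
  refine ⟨fun h => ?_, fun h => by have := len_swp hw hj hjn h; omega⟩
  by_contra hc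
  have h' : slt (ltr w j) (ltr w 0) := (slt_total (hw.2.1 0 (by omega)) (hw.2.1 j hjn)
    (hw.2.2 0 (by omega) j hjn (by omega)).1).resolve_left hc
  have := len_swp (hw.swp hj hjn) hj hjn
    (by rw [ltr_swp hw hj hjn, ltr_swp hw hj hjn, if_pos rfl, if_neg (by omega), if_pos rfl]
        exact h')
  rw [swp_swp hw hj hjn] at this
  omega

lemma len_lt_nswp_iff (hw : Good n w) (hj : 1 ≤ j) (hjn : j < n) :
    len w < len (nswp w j) ↔ slt (ltr w 0) (-(ltr w j)) := by
  refine ⟨fun h => ?_, fun h => by have := len_nswp hw hj hjn h; omega⟩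
  by_contra hc
  have h' : slt (-(ltr w j)) (ltr w 0) := (slt_total (hw.2.1 0 (by omega))
    (neg_ne_zero.2 (hw.2.1 j hjn)) (hw.2.2 0 (by omega) j hjn (by omega)).2).resolve_left hc
  have := len_nswp (hw.nswp hj hjn) hj hjn
    (by rw [ltr_nswp hw hj hjn, ltr_nswp hw hj hjn, if_pos rfl, if_neg (by omega), if_pos rfl,
          neg_neg]
        exact h')
  rw [nswp_nswp hw hj hjn] at this
  omega

lemma len_lt_ngt_iff (hw : Good n w) (hn : 0 < n) : len w < len (ngt w) ↔ 0 < ltr w 0 := by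
  refine ⟨fun h => ?_, fun h => by have := len_ngt hw hn h; omega⟩
  by_contra hc
  have hx := hw.2.1 0 hn
  have := len_ngt (hw.ngt hn) hn (by rw [ltr_ngt hw hn, if_pos rfl]; omega)
  rw [ngt_ngt hw hn] at this
  omega

end

/-! ### The recursion for the sum over admissible subsequences -/

open Polynomial in
/-- The sum over the increasing-admissible subsequences `T` of `Γ` with `(wT)(1) = b`, organized
as a recursion on whether the first reflection of `Γ` is selected. -/
noncomputable def pathSum : List (ℕ × ℤ) → List ℤ → ℤ → ℤ[X]
  | [], w, b => if ltr w 0 = b then 1 else 0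
  | t :: ts, w, b => pathSum ts w b +
      if len w < len (applyRefl w t) then
        (1 - X) * X ^ ((len (applyRefl w t) - len w - 1) / 2) * pathSum ts (applyRefl w t) b
      else 0

/-- The reflections `(1, j)`, `(1, -j)` with `2 ≤ j ≤ n`, and `(1, -1)`. -/
def IsRefl (n : ℕ) (t : ℕ × ℤ) : Prop :=
  (∃ j, 1 ≤ j ∧ j < n ∧ (t = (1, ((j + 1 : ℕ) : ℤ)) ∨ t = (1, -((j + 1 : ℕ) : ℤ)))) ∨ t = (1, -1)

section
variable {n : ℕ} {w : List ℤ}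

lemma Good.applyRefl (hw : Good n w) (hn : 0 < n) {t : ℕ × ℤ} (ht : IsRefl n t) :
    Good n (applyRefl w t) := by
  rcases ht with ⟨j, hj, hjn, rfl | rfl⟩ | rfl
  · exact hw.swp hj hjn
  · exact hw.nswp hj hjn
  · exact hw.ngt hn

lemma slt_of_len_lt (hw : Good n w) (hn : 0 < n) {t : ℕ × ℤ} (ht : IsRefl n t)
    (h : len w < len (applyRefl w t)) : slt (ltr w 0) (ltr (applyRefl w t) 0) := by
  rcases ht with ⟨j, hj, hjn, rfl | rfl⟩ | rfl
  · have := (len_lt_swp_iff hw hj hjn).1 h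
    have e := ltr_swp hw hj hjn 0
    rw [if_pos rfl] at e
    rwa [← e] at this
  · have := (len_lt_nswp_iff hw hj hjn).1 h
    have e := ltr_nswp hw hj hjn 0
    rw [if_pos rfl] at e
    rwa [← e] at this
  · have := (slt_neg_self _).2 ((len_lt_ngt_iff hw hn).1 h)
    have e := ltr_ngt hw hn 0
    rw [if_pos rfl] at e
    rwa [← e] at this

/-- The parity of the length changes, so the exponent `(l(wt) - l(w) - 1) / 2` is exact. -/
lemma exists_len_eq (hw : Good n w) (hn : 0 < n) {t : ℕ × ℤ} (ht : IsRefl n t)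
    (h : len w < len (applyRefl w t)) : ∃ d, len (applyRefl w t) = len w + 1 + 2 * d := by
  rcases ht with ⟨j, hj, hjn, rfl | rfl⟩ | rfl
  · exact ⟨_, len_swp hw hj hjn ((len_lt_swp_iff hw hj hjn).1 h)⟩
  · exact ⟨_, len_nswp hw hj hjn ((len_lt_nswp_iff hw hj hjn).1 h)⟩
  · exact ⟨_, len_ngt hw hn ((len_lt_ngt_iff hw hn).1 h)⟩

/-! ### Comparison of the sum over index sets with the recursion -/

/-- The summand of the subsequence `T`, zero unless `T` is admissible and `(wT)(1) = b`. -/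
noncomputable def term (w : List ℤ) (b : ℤ) (T : List (ℕ × ℤ)) : Polynomial ℤ :=
  if incChain w T = true ∧ (applyAll w T).getD 0 0 = b then
    Polynomial.X ^ ((len (applyAll w T) - len w - T.length) / 2) *
      (1 - Polynomial.X) ^ T.length else 0

lemma exists_len_applyAll (hn : 0 < n) (T : List (ℕ × ℤ)) : ∀ w : List ℤ, Good n w →
    (∀ t ∈ T, IsRefl n t) → incChain w T = true →
    ∃ d, len (applyAll w T) = len w + T.length + 2 * d := by
  induction T with
  | nil => intro w _ _ _; exact ⟨0, by simp [applyAll]⟩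
  | cons t T ih =>
    intro w hw hT hc
    simp only [incChain, Bool.and_eq_true, decide_eq_true_eq] at hc
    have ht := hT t List.mem_cons_self
    obtain ⟨d, hd⟩ := exists_len_eq hw hn ht hc.1
    obtain ⟨e, he⟩ := ih _ (hw.applyRefl hn ht) (fun t h => hT t (List.mem_cons_of_mem _ h)) hc.2
    refine ⟨d + e, ?_⟩
    have : applyAll w (t :: T) = applyAll (HL.applyRefl w t) T := rfl
    rw [this, he, hd, List.length_cons]
    ring

lemma term_cons (hw : Good n w) (hn : 0 < n) {t : ℕ × ℤ} {T : List (ℕ × ℤ)} (b : ℤ)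
    (hT : ∀ s ∈ t :: T, IsRefl n s) :
    term w b (t :: T) = if len w < len (applyRefl w t) then
        (1 - Polynomial.X) * Polynomial.X ^ ((len (applyRefl w t) - len w - 1) / 2) *
          term (applyRefl w t) b T
      else 0 := by
  have e : applyAll w (t :: T) = applyAll (HL.applyRefl w t) T := rfl
  by_cases h : len w < len (applyRefl w t)
  · rw [if_pos h]
    unfold term
    by_cases hc : incChain (applyRefl w t) T = true
    · have ht := hT t List.mem_cons_self
      have hT' : ∀ s ∈ T, IsRefl n s := fun s hs => hT s (List.mem_cons_of_mem _ hs)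
      obtain ⟨d, hd⟩ := exists_len_eq hw hn ht h
      obtain ⟨d', hd'⟩ := exists_len_applyAll hn T _ (hw.applyRefl hn ht) hT' hc
      have hc' : incChain w (t :: T) = true := by simp [incChain, h, hc]
      rw [e]
      simp only [hc, hc', true_and]
      split_ifs
      · have e1 : (len (applyAll (applyRefl w t) T) - len w - (t :: T).length) / 2 = d + d' := by
          rw [hd', hd, List.length_cons]; omega
        have e2 : (len (applyRefl w t) - len w - 1) / 2 = d := by omega
        have e3 : (len (applyAll (applyRefl w t) T) - len (applyRefl w t) - T.length) / 2 = d' := by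
          omega
        rw [e1, e2, e3, List.length_cons]
        ring
      · simp
    · simp [incChain, hc]
  · simp [term, incChain, h]

lemma pathSum_eq_sublists (hn : 0 < n) (b : ℤ) (Γ : List (ℕ × ℤ)) : ∀ w : List ℤ, Good n w →
    (∀ t ∈ Γ, IsRefl n t) → (Γ.sublists'.map (term w b)).sum = pathSum Γ w b := by
  induction Γ with
  | nil => intro w _ _; simp [term, incChain, applyAll, pathSum, ltr]
  | cons t Γ ih =>
    intro w hw hΓ
    have ht := hΓ t List.mem_cons_self
    have hΓ' : ∀ s ∈ Γ, IsRefl n s := fun s hs => hΓ s (List.mem_cons_of_mem _ hs)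
    rw [List.sublists'_cons, List.map_append, List.sum_append, ih w hw hΓ', pathSum, List.map_map]
    congr 1
    have : (Γ.sublists'.map (term w b ∘ List.cons t)) = Γ.sublists'.map (fun T =>
        (if len w < len (applyRefl w t) then
          (1 - Polynomial.X) * Polynomial.X ^ ((len (applyRefl w t) - len w - 1) / 2) else 0) *
          term (applyRefl w t) b T) := by
      refine List.map_congr_left fun T hT => ?_
      rw [List.mem_sublists'] at hT
      rw [Function.comp, term_cons hw hn b]
      · split_ifs <;> simp
      · intro s hs
        rcases List.mem_cons.1 hs with rfl | hs
        · exact ht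
        · exact hΓ' s (hT.subset hs)
    rw [this, List.sum_map_mul_left, ih _ (hw.applyRefl hn ht) hΓ']
    split_ifs <;> simp

end

lemma sort_map_succ (J : Finset ℕ) :
    (J.map ⟨Nat.succ, Nat.succ_injective⟩).sort (· ≤ ·) = (J.sort (· ≤ ·)).map Nat.succ := by
  refine List.Perm.eq_of_pairwise (le := (· ≤ ·)) (fun _ _ _ _ h h' => le_antisymm h h')
    (Finset.pairwise_sort _ _) ?_ ?_
  · rw [List.pairwise_map]
    exact (Finset.pairwise_sort J (· ≤ ·)).imp fun h => Nat.succ_le_succ h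
  · rw [List.perm_ext_iff_of_nodup (Finset.sort_nodup _ _)
      ((Finset.sort_nodup _ _).map Nat.succ_injective)]
    intro a
    simp

lemma selChain_map_succ (t : ℕ × ℤ) (Γ : List (ℕ × ℤ)) (J : Finset ℕ) :
    selChain (t :: Γ) (J.map ⟨Nat.succ, Nat.succ_injective⟩) = selChain Γ J := by
  unfold selChain
  rw [sort_map_succ, List.map_map]
  rfl

lemma selChain_insert_zero (t : ℕ × ℤ) (Γ : List (ℕ × ℤ)) (J : Finset ℕ) :
    selChain (t :: Γ) (insert 0 (J.map ⟨Nat.succ, Nat.succ_injective⟩)) = t :: selChain Γ J := by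
  rw [← selChain_map_succ t Γ J]
  unfold selChain
  rw [Finset.sort_insert (· ≤ ·) (fun b _ => Nat.zero_le b) (by simp)]
  rfl

/-- Index sets `J` correspond to the members of `Γ.sublists'`. -/
lemma sum_powerset_selChain (Γ : List (ℕ × ℤ)) : ∀ φ : List (ℕ × ℤ) → Polynomial ℤ,
    ∑ J ∈ (Finset.range Γ.length).powerset, φ (selChain Γ J) = (Γ.sublists'.map φ).sum := by
  induction Γ with
  | nil => intro φ; simp [selChain]
  | cons t Γ ih =>
    intro φ
    have e : Finset.range (t :: Γ).length =
        insert 0 ((Finset.range Γ.length).map ⟨Nat.succ, Nat.succ_injective⟩) := by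
      rw [List.length_cons, Finset.range_add_one']
    have e' : ((Finset.range Γ.length).map ⟨Nat.succ, Nat.succ_injective⟩).powerset =
        (Finset.range Γ.length).powerset.map
          (Finset.mapEmbedding ⟨Nat.succ, Nat.succ_injective⟩).toEmbedding := by
      ext J
      simp only [Finset.mem_powerset, Finset.mem_map, RelEmbedding.coe_toEmbedding,
        Finset.mapEmbedding_apply]
      rw [Finset.subset_map_iff]
      exact ⟨fun ⟨u, h, h'⟩ => ⟨u, h, h'.symm⟩, fun ⟨u, h, h'⟩ => ⟨u, h, h'.symm⟩⟩
    rw [e, Finset.sum_powerset_insert (by simp), e', Finset.sum_map, Finset.sum_map]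
    simp only [RelEmbedding.coe_toEmbedding, Finset.mapEmbedding_apply, selChain_map_succ,
      selChain_insert_zero]
    rw [ih, ih (fun T => φ (t :: T)), List.sublists'_cons, List.map_append, List.sum_append,
      List.map_map]
    rfl

lemma length_selChain (Γ : List (ℕ × ℤ)) (J : Finset ℕ) : (selChain Γ J).length = J.card := by
  simp [selChain]

lemma finsum_eq_pathSum {n : ℕ} (hn : 0 < n) {w : List ℤ} (hw : Good n w) (b : ℤ)
    (Γ : List (ℕ × ℤ)) (hΓ : ∀ t ∈ Γ, IsRefl n t) :
    (∑ᶠ (J : Finset ℕ) (_ : J ⊆ Finset.range Γ.length ∧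
        incChain w (selChain Γ J) = true ∧ (applyAll w (selChain Γ J)).getD 0 0 = b),
      (Polynomial.X : Polynomial ℤ) ^
          ((len (applyAll w (selChain Γ J)) - len w - J.card) / 2) *
        (1 - Polynomial.X) ^ J.card) = pathSum Γ w b := by
  rw [← pathSum_eq_sublists hn b Γ w hw hΓ, ← sum_powerset_selChain]
  rw [← finsum_mem_finset_eq_sum]
  refine finsum_congr fun J => ?_
  by_cases h1 : J ⊆ Finset.range Γ.length
  · by_cases h2 : incChain w (selChain Γ J) = true ∧ (applyAll w (selChain Γ J)).getD 0 0 = b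
    · simp only [h1, h2, finsum_true, Finset.mem_powerset, term, length_selChain, if_true,
        and_self]
    · simp only [h1, h2, true_and, finsum_true, finsum_false, Finset.mem_powerset, term, if_false]
  · simp only [h1, false_and, finsum_false, Finset.mem_powerset]

/-! ### One step of the recursion -/

open Polynomial

section
variable {n : ℕ} {w : List ℤ} {j : ℕ}

lemma pathSum_swp (hw : Good n w) (hj : 1 ≤ j) (hjn : j < n) (b : ℤ) (Γ : List (ℕ × ℤ)) :
    pathSum ((1, ((j + 1 : ℕ) : ℤ)) :: Γ) w b = pathSum Γ w b +
      if slt (ltr w 0) (ltr w j) then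
        (1 - X) * X ^ (∑ k ∈ Finset.Ico 1 j, btw (ltr w 0) (ltr w j) (ltr w k)) *
          pathSum Γ (swp w j) b
      else 0 := by
  have e : applyRefl w (1, ((j + 1 : ℕ) : ℤ)) = swp w j := rfl
  rw [pathSum, e]
  simp only [len_lt_swp_iff hw hj hjn]
  split_ifs with h
  · have := len_swp hw hj hjn h
    rw [show (len (swp w j) - len w - 1) / 2 =
      ∑ k ∈ Finset.Ico 1 j, btw (ltr w 0) (ltr w j) (ltr w k) by omega]
  · rfl

lemma pathSum_nswp (hw : Good n w) (hj : 1 ≤ j) (hjn : j < n) (b : ℤ) (Γ : List (ℕ × ℤ)) :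
    pathSum ((1, -((j + 1 : ℕ) : ℤ)) :: Γ) w b = pathSum Γ w b +
      if slt (ltr w 0) (-(ltr w j)) then
        (1 - X) * X ^ (sgn (ltr w 0) (-(ltr w j)) +
          ∑ k ∈ Finset.Ico 1 j, btw (ltr w 0) (-(ltr w j)) (ltr w k) +
          ∑ k ∈ Finset.Ico (j + 1) n, (btw (ltr w 0) (-(ltr w j)) (ltr w k) +
            btw (ltr w 0) (-(ltr w j)) (-(ltr w k)))) * pathSum Γ (nswp w j) b
      else 0 := by
  have e : applyRefl w (1, -((j + 1 : ℕ) : ℤ)) = nswp w j := rfl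
  rw [pathSum, e]
  simp only [len_lt_nswp_iff hw hj hjn]
  split_ifs with h
  · have := len_nswp hw hj hjn h
    rw [this, Nat.add_assoc, Nat.add_sub_cancel_left, Nat.add_sub_cancel_left,
      Nat.mul_div_cancel_left _ (by norm_num)]
  · rfl

lemma pathSum_ngt (hw : Good n w) (hn : 0 < n) (b : ℤ) (Γ : List (ℕ × ℤ)) :
    pathSum ((1, -1) :: Γ) w b = pathSum Γ w b +
      if 0 < ltr w 0 then
        (1 - X) * X ^ (∑ k ∈ Finset.Ico 1 n, btw (ltr w 0) (-(ltr w 0)) (ltr w k)) *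
          pathSum Γ (ngt w) b
      else 0 := by
  have e : applyRefl w (1, -1) = ngt w := rfl
  rw [pathSum, e]
  simp only [len_lt_ngt_iff hw hn]
  split_ifs with h
  · have := len_ngt hw hn h
    rw [show (len (ngt w) - len w - 1) / 2 =
      ∑ k ∈ Finset.Ico 1 n, btw (ltr w 0) (-(ltr w 0)) (ltr w k) by omega]
  · rfl

end

/-- The first letter only moves up in `≺`, so a target below it is never reached. -/
lemma pathSum_eq_zero {n : ℕ} (hn : 0 < n) (b : ℤ) (Γ : List (ℕ × ℤ)) : ∀ w : List ℤ, Good n w →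
    (∀ t ∈ Γ, IsRefl n t) → ¬ sle (ltr w 0) b → pathSum Γ w b = 0 := by
  induction Γ with
  | nil =>
    intro w _ _ h
    rw [pathSum, if_neg]
    exact fun h' => h (Or.inr h')
  | cons t Γ ih =>
    intro w hw hΓ h
    have ht := hΓ t List.mem_cons_self
    have hΓ' : ∀ s ∈ Γ, IsRefl n s := fun s hs => hΓ s (List.mem_cons_of_mem _ hs)
    rw [pathSum, ih w hw hΓ' h]
    split_ifs with hl
    · have hs := slt_of_len_lt hw hn ht hl
      rw [ih _ (hw.applyRefl hn ht) hΓ', mul_zero, add_zero]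
      rintro (h' | h')
      · exact h (Or.inl (slt_trans hs h'))
      · exact h (Or.inl (h' ▸ hs))
    · rw [add_zero]

/-- Only the empty subsequence keeps the first letter. -/
lemma pathSum_self {n : ℕ} (hn : 0 < n) (Γ : List (ℕ × ℤ)) (w : List ℤ) (hw : Good n w)
    (hΓ : ∀ t ∈ Γ, IsRefl n t) : pathSum Γ w (ltr w 0) = 1 := by
  induction Γ with
  | nil => simp [pathSum]
  | cons t Γ ih =>
    have ht := hΓ t List.mem_cons_self
    have hΓ' : ∀ s ∈ Γ, IsRefl n s := fun s hs => hΓ s (List.mem_cons_of_mem _ hs)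
    rw [pathSum, ih hΓ']
    split_ifs with hl
    · have hs := slt_of_len_lt hw hn ht hl
      rw [pathSum_eq_zero hn _ Γ _ (hw.applyRefl hn ht) hΓ', mul_zero, add_zero]
      rintro (h' | h')
      · exact slt_asymm hs h'
      · rw [h'] at hs
        exact slt_irrefl _ hs
    · rw [add_zero]

/-! ### The suffixes of `Δ` -/

lemma deltaSuffixNeg_self (p : ℕ) : deltaSuffixNeg p p = [] := by simp [deltaSuffixNeg]

lemma deltaSuffixNeg_succ {p s : ℕ} (h : p ≤ s) :
    deltaSuffixNeg p (s + 1) = (1, -((s + 1 : ℕ) : ℤ)) :: deltaSuffixNeg p s := by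
  unfold deltaSuffixNeg
  rw [Nat.sub_add_comm h, List.range_succ_eq_map, List.map_cons, List.map_map]
  refine congrArg₂ _ (by simp) (List.map_congr_left fun r _ => ?_)
  simp only [Function.comp]
  rw [show s + 1 - Nat.succ r = s - r by omega]

lemma deltaSuffixBar1_eq (n p : ℕ) : deltaSuffixBar1 n p = (1, -1) :: deltaSuffixNeg p n := rfl

lemma deltaSuffixPos_last (n p : ℕ) : deltaSuffixPos n p (n + 1) = deltaSuffixBar1 n p := by
  simp [deltaSuffixPos, deltaSuffixBar1]

lemma deltaSuffixPos_cons {n p s : ℕ} (h : s < n) :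
    deltaSuffixPos n p (s + 1) = (1, ((s + 1 : ℕ) : ℤ)) :: deltaSuffixPos n p (s + 1 + 1) := by
  unfold deltaSuffixPos
  rw [show n + 1 - (s + 1) = (n + 1 - (s + 1 + 1)) + 1 by omega, List.range_succ_eq_map,
    List.map_cons, List.map_map, List.cons_append, List.cons_append]
  refine congrArg₂ _ (by simp) ?_
  congr 2
  refine List.map_congr_left fun r _ => ?_
  simp only [Function.comp]
  rw [show s + 1 + Nat.succ r = s + 1 + 1 + r by omega]

lemma deltaChain_eq (n p : ℕ) : deltaChain n p = deltaSuffixPos n p (p + 1) := by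
  unfold deltaChain deltaSuffixPos
  rw [Nat.add_sub_add_right]

lemma isRefl_neg {n p s : ℕ} (hp : 1 ≤ p) (hs : s ≤ n) : ∀ t ∈ deltaSuffixNeg p s, IsRefl n t := by
  intro t ht
  simp only [deltaSuffixNeg, List.mem_map, List.mem_range] at ht
  obtain ⟨r, hr, rfl⟩ := ht
  refine Or.inl ⟨s - r - 1, by omega, by omega, Or.inr ?_⟩
  rw [show s - r - 1 + 1 = s - r by omega]

lemma isRefl_bar1 {n p : ℕ} (hp : 1 ≤ p) : ∀ t ∈ deltaSuffixBar1 n p, IsRefl n t := by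
  intro t ht
  rw [deltaSuffixBar1_eq] at ht
  rcases List.mem_cons.1 ht with rfl | ht
  · exact Or.inr rfl
  · exact isRefl_neg hp le_rfl t ht

lemma isRefl_pos {n p s : ℕ} (hp : 1 ≤ p) (hs : p ≤ s) :
    ∀ t ∈ deltaSuffixPos n p (s + 1), IsRefl n t := by
  intro t ht
  unfold deltaSuffixPos at ht
  rw [List.append_assoc] at ht
  rcases List.mem_append.1 ht with ht | ht
  · simp only [List.mem_map, List.mem_range] at ht
    obtain ⟨r, hr, rfl⟩ := ht
    refine Or.inl ⟨s + r, by omega, by omega, Or.inl ?_⟩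
    rw [show s + r + 1 = s + 1 + r by omega]
  · exact isRefl_bar1 hp t ht

/-! ### Unreachable first letters -/

section
variable {n p s : ℕ} {b : ℤ}

lemma pathSum_neg_eq_zero (hp : 1 ≤ p) (hps : p ≤ s) (hs : s ≤ n) : ∀ w : List ℤ, Good n w →
    b ≠ ltr w 0 → (∀ q, p ≤ q → q < s → b ≠ -(ltr w q)) →
    pathSum (deltaSuffixNeg p s) w b = 0 := by
  induction s, hps using Nat.le_induction with
  | base =>
    intro w _ h _
    rw [deltaSuffixNeg_self, pathSum, if_neg h.symm]
  | succ s hps ih =>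
    intro w hw h0 hq
    have g := ltr_nswp hw (hp.trans hps) (by omega : s < n)
    rw [deltaSuffixNeg_succ hps, pathSum_nswp hw (hp.trans hps) (by omega),
      ih (by omega) w hw h0 (fun q h1 h2 => hq q h1 (by omega)),
      ih (by omega) (nswp w s) (hw.nswp (hp.trans hps) (by omega)) ?_ ?_]
    · simp
    · rw [g, if_pos rfl]
      exact hq s hps (by omega)
    · intro q h1 h2
      rw [g, if_neg (by omega), if_neg (by omega)]
      exact hq q h1 (by omega)

lemma pathSum_bar1_eq_zero (hp : 1 ≤ p) (hpn : p ≤ n) {w : List ℤ} (hw : Good n w)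
    (h0 : b ≠ ltr w 0) (h1 : b ≠ -(ltr w 0)) (hq : ∀ q, p ≤ q → q < n → b ≠ -(ltr w q)) :
    pathSum (deltaSuffixBar1 n p) w b = 0 := by
  have hn : 0 < n := by omega
  have g := ltr_ngt hw hn
  rw [deltaSuffixBar1_eq, pathSum_ngt hw hn, pathSum_neg_eq_zero hp hpn le_rfl w hw h0 hq,
    pathSum_neg_eq_zero hp hpn le_rfl _ (hw.ngt hn) (by rwa [g, if_pos rfl])]
  · simp
  · intro q h1 h2
    rw [g, if_neg (by omega)]
    exact hq q h1 h2

lemma pathSum_pos_eq_zero (hp : 1 ≤ p) (hs : s ≤ n) : p ≤ s → ∀ w : List ℤ, Good n w →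
    b ≠ ltr w 0 → b ≠ -(ltr w 0) → (∀ q, p ≤ q → q < n → b ≠ -(ltr w q)) →
    (∀ q, s ≤ q → q < n → b ≠ ltr w q) →
    pathSum (deltaSuffixPos n p (s + 1)) w b = 0 := by
  induction hs using Nat.decreasingInduction with
  | self =>
    intro hps w hw h0 h1 hq _
    rw [deltaSuffixPos_last]
    exact pathSum_bar1_eq_zero hp hps hw h0 h1 hq
  | of_succ s hs ih =>
    intro hps w hw h0 h1 hq hq'
    have g := ltr_swp hw (hp.trans hps) hs
    rw [deltaSuffixPos_cons hs, pathSum_swp hw (hp.trans hps) hs,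
      ih (by omega) w hw h0 h1 hq (fun q h2 h3 => hq' q (by omega) h3),
      ih (by omega) (swp w s) (hw.swp (hp.trans hps) hs) ?_ ?_ ?_ ?_]
    · simp
    · rw [g, if_pos rfl]
      exact hq' s le_rfl hs
    · rw [g, if_pos rfl]
      exact hq s hps hs
    · intro q h2 h3
      rw [g, if_neg (by omega)]
      split_ifs
      · exact h1
      · exact hq q h2 h3
    · intro q h2 h3
      rw [g, if_neg (by omega), if_neg (by omega)]
      exact hq' q (by omega) h3

end

/-! ### Closed forms for the suffixes of `Δ` -/

/-- The identity `t + (1 - t) = 1` that collapses the two branches of the recursion. -/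
lemma telescope {A B C : ℕ} (h : B + C = A) :
    (1 - X : ℤ[X]) * X ^ (A + 1) + (1 - X) * X ^ B * ((1 - X) * X ^ C) = (1 - X) * X ^ A := by
  subst h; ring

/-- For `a ≺ -y ≺ b`, replacing `a`, `y` by `-y`, `-a` in the positions they occupy preserves the
count of letters between the first letter and `b`, up to the correction for the letter `-b`. -/
lemma btw_neg_exchange {a b y : ℤ} (ha : a ≠ 0) (hb : b ≠ 0) (hy : y ≠ 0) (hab : a ≠ -b)
    (hyb : y ≠ b) (h1 : slt a (-y)) (h2 : slt (-y) b) :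
    btw a b y + btw (-y) b (-b) = btw (-y) b (-a) + btw (-y) b a + btw a b (-b) := by
  rcases lt_or_gt_of_ne ha with ha | ha <;> rcases lt_or_gt_of_ne hb with hb | hb <;>
    rcases lt_or_gt_of_ne hy with hy | hy <;>
    simp only [slt, btw, neg_pos, neg_lt_zero, ha, hb, hy, ha.not_gt, hb.not_gt, hy.not_gt, true_and,
      false_and, and_true, and_false, or_false, false_or, if_false] at h1 h2 ⊢ <;>
    split_ifs <;> omega

lemma btw_eq_zero_of_not {a b c : ℤ} (h : ¬ (slt a c ∧ slt c b)) : btw a b c = 0 := if_neg h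

lemma btw_eq_one {a b c : ℤ} (h1 : slt a c) (h2 : slt c b) : btw a b c = 1 := if_pos ⟨h1, h2⟩

section
variable {n p s : ℕ} {b : ℤ}

/-- Closed form for the suffix `(1, -s), ..., (1, -(p+1))` of `Δ`. The exponent `E` counts the
letters between `a = w(1)` and `b` in the 0-based positions `1, ..., s - 1`, except for the letter
`w(q) = -b`, and the letters of both signs in the later positions, which `Δ` has already passed;
the sign term comes from the diagonal part of the length. -/
lemma pathSum_neg (hp : 1 ≤ p) (hps : p ≤ s) (hs : s ≤ n) : ∀ w : List ℤ, Good n w →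
    slt (ltr w 0) b → ∀ q, p ≤ q → q < s → b = -(ltr w q) → ∀ E : ℕ,
    E + btw (ltr w 0) b (-b) = sgn (ltr w 0) b + ∑ k ∈ Finset.Ico 1 s, btw (ltr w 0) b (ltr w k) +
      ∑ k ∈ Finset.Ico s n, (btw (ltr w 0) b (ltr w k) + btw (ltr w 0) b (-(ltr w k))) →
    pathSum (deltaSuffixNeg p s) w b = (1 - X) * X ^ E := by
  induction s, hps using Nat.le_induction with
  | base => intro w _ _ q h1 h2; omega
  | succ s hps ih =>
    intro w hw hab q hpq hqs hbq E hE
    have hs1 : 1 ≤ s := hp.trans hps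
    have hsn : s < n := by omega
    have hn : 0 < n := by omega
    have g := ltr_nswp hw hs1 hsn
    have g0 : ltr (nswp w s) 0 = -(ltr w s) := by rw [g, if_pos rfl]
    have hw' := hw.nswp hs1 hsn
    have hIs := isRefl_neg hp hsn.le
    have ha0 := hw.2.1 0 hn
    have hy0 := hw.2.1 s hsn
    have hq0 := hw.2.1 q (by omega)
    have hb0 : b ≠ 0 := by omega
    have h0q := hw.2.2 0 hn q (by omega) (by omega)
    have h0s := hw.2.2 0 hn s hsn (by omega)
    rw [deltaSuffixNeg_succ hps, pathSum_nswp hw hs1 hsn]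
    rw [Finset.sum_Ico_succ_top hs1] at hE
    rcases eq_or_ne q s with rfl | hne
    · rw [pathSum_neg_eq_zero hp hps hsn.le w hw (by omega), ← hbq, if_pos hab,
        show pathSum (deltaSuffixNeg p q) (nswp w q) b = 1 by
          rw [hbq, ← g0]; exact pathSum_self hn _ _ hw' hIs, zero_add, mul_one]
      · congr 2
        rw [show -b = ltr w q by omega] at hE
        omega
      · intro k h1 h2
        have := (hw.2.2 q hsn k (by omega) (by omega)).1
        omega
    · have hqs' : q < s := by omega
      have hqy := hw.2.2 q (by omega) s hsn hne
      rw [ih hsn.le w hw hab q hpq hqs' hbq (E + btw (ltr w 0) b (-(ltr w s)))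
        (by rw [Finset.sum_eq_sum_Ico_succ_bot hsn]; omega)]
      by_cases hc : slt (ltr w 0) (-(ltr w s)) ∧ slt (-(ltr w s)) b
      · obtain ⟨h1, h2⟩ := hc
        rw [if_pos h1, btw_eq_one h1 h2]
        have hsum1 : ∑ k ∈ Finset.Ico 1 s, btw (ltr w 0) b (ltr w k) =
            ∑ k ∈ Finset.Ico 1 s, btw (ltr w 0) (-(ltr w s)) (ltr w k) +
            ∑ k ∈ Finset.Ico 1 s, btw (-(ltr w s)) b (ltr w k) := by
          rw [← Finset.sum_add_distrib]
          refine Finset.sum_congr rfl fun k hk => ?_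
          rw [Finset.mem_Ico] at hk
          have hk0 := hw.2.1 k (by omega)
          have := hw.2.2 k (by omega) s hsn (by omega)
          exact btw_add (by omega) hk0 h1 h2 this.2
        have hsum2 : ∑ k ∈ Finset.Ico (s + 1) n,
              (btw (ltr w 0) b (ltr w k) + btw (ltr w 0) b (-(ltr w k))) =
            ∑ k ∈ Finset.Ico (s + 1) n, (btw (ltr w 0) (-(ltr w s)) (ltr w k) +
              btw (ltr w 0) (-(ltr w s)) (-(ltr w k))) +
            ∑ k ∈ Finset.Ico (s + 1) n, (btw (-(ltr w s)) b (ltr w k) +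
              btw (-(ltr w s)) b (-(ltr w k))) := by
          rw [← Finset.sum_add_distrib]
          refine Finset.sum_congr rfl fun k hk => ?_
          rw [Finset.mem_Ico] at hk
          have hk0 := hw.2.1 k (by omega)
          have := hw.2.2 k (by omega) s hsn (by omega)
          rw [btw_add (c := ltr w k) (by omega) hk0 h1 h2 this.2,
            btw_add (c := -(ltr w k)) (by omega) (by omega) h1 h2 (by omega)]
          ring
        have hsg := sgn_add h1 h2
        have hex := btw_neg_exchange ha0 hb0 hy0 (by omega) (by omega) h1 h2
        have hz : btw (-(ltr w s)) b (ltr w 0) = 0 :=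
          btw_eq_zero_of_not fun h => slt_asymm h1 h.1
        have hsum3 : ∑ k ∈ Finset.Ico 1 s, btw (-(ltr w s)) b (ltr (nswp w s) k) =
            ∑ k ∈ Finset.Ico 1 s, btw (-(ltr w s)) b (ltr w k) := by
          refine Finset.sum_congr rfl fun k hk => ?_
          rw [Finset.mem_Ico] at hk
          rw [g, if_neg (by omega), if_neg (by omega)]
        have hsum4 : ∑ k ∈ Finset.Ico (s + 1) n, (btw (-(ltr w s)) b (ltr (nswp w s) k) +
              btw (-(ltr w s)) b (-(ltr (nswp w s) k))) =
            ∑ k ∈ Finset.Ico (s + 1) n, (btw (-(ltr w s)) b (ltr w k) +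
              btw (-(ltr w s)) b (-(ltr w k))) := by
          refine Finset.sum_congr rfl fun k hk => ?_
          rw [Finset.mem_Ico] at hk
          rw [g, if_neg (by omega), if_neg (by omega)]
        have gs : ltr (nswp w s) s = -(ltr w 0) := by rw [g, if_neg (by omega), if_pos rfl]
        have hle : btw (-(ltr w s)) b (-b) ≤ ∑ k ∈ Finset.Ico 1 s, btw (-(ltr w s)) b (ltr w k) := by
          rw [show -b = ltr w q by omega]
          exact Finset.single_le_sum (f := fun k => btw (-(ltr w s)) b (ltr w k))
            (fun _ _ => Nat.zero_le _) (Finset.mem_Ico.2 ⟨by omega, hqs'⟩)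
        have ih' := ih hsn.le (nswp w s) hw' (by rwa [g0]) q hpq hqs'
          (by rw [g, if_neg (by omega), if_neg hne]; exact hbq)
          (sgn (-(ltr w s)) b + (∑ k ∈ Finset.Ico 1 s, btw (-(ltr w s)) b (ltr w k)
            - btw (-(ltr w s)) b (-b)) + btw (-(ltr w s)) b (-(ltr w 0)) +
            ∑ k ∈ Finset.Ico (s + 1) n, (btw (-(ltr w s)) b (ltr w k) +
              btw (-(ltr w s)) b (-(ltr w k))))
          (by rw [Finset.sum_eq_sum_Ico_succ_bot hsn, g0, gs, hsum3, hsum4, neg_neg]; omega)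
        rw [ih']
        exact telescope (by omega)
      · rw [btw_eq_zero_of_not hc, add_zero]
        split_ifs with h1
        · rw [pathSum_eq_zero hn b _ _ hw' hIs, mul_zero, add_zero]
          rw [g0]
          rintro (h | h)
          · exact hc ⟨h1, h⟩
          · omega
        · rw [add_zero]

/-- Closed form for the suffix of `Δ` starting with `(1, -1)`. -/
lemma pathSum_bar1 (hp : 1 ≤ p) (hpn : p ≤ n) {w : List ℤ} (hw : Good n w)
    (hab : slt (ltr w 0) b)
    (hb : b = -(ltr w 0) ∨ ∃ q, p ≤ q ∧ q < n ∧ b = -(ltr w q)) :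
    pathSum (deltaSuffixBar1 n p) w b =
      (1 - X) * X ^ (∑ k ∈ Finset.Ico 1 n, btw (ltr w 0) b (ltr w k)) := by
  have hn : 0 < n := by omega
  have g := ltr_ngt hw hn
  have g0 : ltr (ngt w) 0 = -(ltr w 0) := by rw [g, if_pos rfl]
  have hw' := hw.ngt hn
  have hI := isRefl_neg hp (le_refl n)
  have ha0 := hw.2.1 0 hn
  rw [deltaSuffixBar1_eq, pathSum_ngt hw hn]
  rcases hb with hb | ⟨q, hpq, hqn, hbq⟩
  · have hpos : 0 < ltr w 0 := by rwa [hb, slt_neg_self] at hab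
    rw [pathSum_neg_eq_zero hp hpn le_rfl w hw (by omega), if_pos hpos, ← hb,
      show pathSum (deltaSuffixNeg p n) (ngt w) b = 1 by
        rw [hb, ← g0]; exact pathSum_self hn _ _ hw' hI, zero_add, mul_one]
    intro k h1 h2
    have := (hw.2.2 0 hn k h2 (by omega)).1
    omega
  · have hq0 := hw.2.1 q hqn
    have h0q := hw.2.2 0 hn q hqn (by omega)
    -- The letter `w(q) = -b` is counted in the sum, so the exponents below stay nonnegative.
    have hle : ∀ x, btw x b (-b) ≤ ∑ k ∈ Finset.Ico 1 n, btw x b (ltr w k) := by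
      intro x
      rw [show -b = ltr w q by omega]
      exact Finset.single_le_sum (f := fun k => btw x b (ltr w k))
        (fun _ _ => Nat.zero_le _) (Finset.mem_Ico.2 ⟨by omega, hqn⟩)
    have hF := pathSum_neg hp hpn le_rfl w hw hab q hpq hqn hbq
      (sgn (ltr w 0) b + (∑ k ∈ Finset.Ico 1 n, btw (ltr w 0) b (ltr w k) - btw (ltr w 0) b (-b)))
      (by have := hle (ltr w 0); simp only [Finset.Ico_self, Finset.sum_empty]; omega)
    rw [hF]
    by_cases hc : 0 < ltr w 0 ∧ slt (-(ltr w 0)) b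
    · obtain ⟨hpos, h2⟩ := hc
      have h1 := (slt_neg_self _).2 hpos
      have hbneg : b < 0 := by unfold slt at h2; omega
      have e1 : sgn (ltr w 0) b = 1 := if_pos ⟨hpos, hbneg⟩
      have e2 : sgn (-(ltr w 0)) b = 0 := if_neg (by omega)
      have e3 : btw (ltr w 0) b (-b) = 0 := by
        apply btw_eq_zero_of_not; unfold slt at *; omega
      have e4 : btw (-(ltr w 0)) b (-b) = 0 := by
        apply btw_eq_zero_of_not; unfold slt at *; omega
      have hsum : ∑ k ∈ Finset.Ico 1 n, btw (ltr w 0) b (ltr w k) =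
          ∑ k ∈ Finset.Ico 1 n, btw (ltr w 0) (-(ltr w 0)) (ltr w k) +
          ∑ k ∈ Finset.Ico 1 n, btw (-(ltr w 0)) b (ltr w k) := by
        rw [← Finset.sum_add_distrib]
        refine Finset.sum_congr rfl fun k hk => ?_
        rw [Finset.mem_Ico] at hk
        exact btw_add (by omega) (hw.2.1 k hk.2) h1 h2 (hw.2.2 k hk.2 0 hn (by omega)).2
      have hsum' : ∑ k ∈ Finset.Ico 1 n, btw (-(ltr w 0)) b (ltr (ngt w) k) =
          ∑ k ∈ Finset.Ico 1 n, btw (-(ltr w 0)) b (ltr w k) := by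
        refine Finset.sum_congr rfl fun k hk => ?_
        rw [Finset.mem_Ico] at hk
        rw [g, if_neg (by omega)]
      have hF' := pathSum_neg hp hpn le_rfl (ngt w) hw' (by rwa [g0]) q hpq hqn
        (by rw [g, if_neg (by omega)]; exact hbq)
        (∑ k ∈ Finset.Ico 1 n, btw (-(ltr w 0)) b (ltr w k))
        (by simp only [Finset.Ico_self, Finset.sum_empty]; rw [g0, hsum', e2, e4]; omega)
      rw [if_pos hpos, hF', e1, e3, Nat.sub_zero, Nat.add_comm]
      exact telescope hsum.symm
    · have e : sgn (ltr w 0) b = btw (ltr w 0) b (-b) := by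
        unfold sgn btw; unfold slt at *; split_ifs <;> omega
      have e' : sgn (ltr w 0) b + (∑ k ∈ Finset.Ico 1 n, btw (ltr w 0) b (ltr w k) -
          btw (ltr w 0) b (-b)) = ∑ k ∈ Finset.Ico 1 n, btw (ltr w 0) b (ltr w k) := by
        have := hle (ltr w 0); omega
      rw [e']
      split_ifs with h1
      · rw [pathSum_eq_zero hn b _ _ hw' hI, mul_zero, add_zero]
        rw [g0]
        rintro (h | h)
        · exact hc ⟨h1, h⟩
        · omega
      · rw [add_zero]

/-- Closed form for the suffix of `Δ` starting with `(1, s + 1)`. -/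
lemma pathSum_pos (hp : 1 ≤ p) (hs : s ≤ n) : p ≤ s → ∀ w : List ℤ, Good n w →
    slt (ltr w 0) b →
    (b = -(ltr w 0) ∨ (∃ q, p ≤ q ∧ q < n ∧ b = -(ltr w q)) ∨
      ∃ q, s ≤ q ∧ q < n ∧ b = ltr w q) →
    pathSum (deltaSuffixPos n p (s + 1)) w b =
      (1 - X) * X ^ (∑ k ∈ Finset.Ico 1 s, btw (ltr w 0) b (ltr w k)) := by
  induction hs using Nat.decreasingInduction with
  | self =>
    intro hps w hw hab hb
    rw [deltaSuffixPos_last]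
    refine pathSum_bar1 hp hps hw hab ?_
    rcases hb with hb | hb | ⟨q, h1, h2, _⟩
    · exact Or.inl hb
    · exact Or.inr hb
    · omega
  | of_succ s hsn ih =>
    intro hps w hw hab hb
    have hs1 : 1 ≤ s := hp.trans hps
    have hn : 0 < n := by omega
    have g := ltr_swp hw hs1 hsn
    have g0 : ltr (swp w s) 0 = ltr w s := by rw [g, if_pos rfl]
    have gs : ltr (swp w s) s = ltr w 0 := by rw [g, if_neg (by omega), if_pos rfl]
    have hw' := hw.swp hs1 hsn
    have hI : ∀ t ∈ deltaSuffixPos n p (s + 1 + 1), IsRefl n t := isRefl_pos hp (by omega)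
    have ha0 := hw.2.1 0 hn
    have hy0 := hw.2.1 s hsn
    have h0s := hw.2.2 0 hn s hsn (by omega)
    rw [deltaSuffixPos_cons hsn, pathSum_swp hw hs1 hsn]
    rcases eq_or_ne b (ltr w s) with hbs | hbs
    · rw [pathSum_pos_eq_zero hp hsn (by omega) w hw (by omega) (by omega), if_pos (by rwa [← hbs]),
        ← hbs, show pathSum (deltaSuffixPos n p (s + 1 + 1)) (swp w s) b = 1 by
          rw [hbs, ← g0]; exact pathSum_self hn _ _ hw' hI, zero_add, mul_one]
      · intro q h1 h2
        rcases eq_or_ne q s with rfl | hne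
        · omega
        · have := (hw.2.2 s hsn q h2 hne.symm).2
          omega
      · intro q h1 h2
        have := (hw.2.2 s hsn q h2 (by omega)).1
        omega
    · rw [ih (by omega) w hw hab, Finset.sum_Ico_succ_top hs1]
      · by_cases hc : slt (ltr w 0) (ltr w s) ∧ slt (ltr w s) b
        · obtain ⟨h1, h2⟩ := hc
          have hsum : ∑ k ∈ Finset.Ico 1 s, btw (ltr w 0) b (ltr w k) =
              ∑ k ∈ Finset.Ico 1 s, btw (ltr w 0) (ltr w s) (ltr w k) +
              ∑ k ∈ Finset.Ico 1 s, btw (ltr w s) b (ltr w k) := by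
            rw [← Finset.sum_add_distrib]
            refine Finset.sum_congr rfl fun k hk => ?_
            rw [Finset.mem_Ico] at hk
            exact btw_add hy0 (hw.2.1 k (by omega)) h1 h2
              (hw.2.2 k (by omega) s hsn (by omega)).1
          have hsum' : ∑ k ∈ Finset.Ico 1 s, btw (ltr w s) b (ltr (swp w s) k) =
              ∑ k ∈ Finset.Ico 1 s, btw (ltr w s) b (ltr w k) := by
            refine Finset.sum_congr rfl fun k hk => ?_
            rw [Finset.mem_Ico] at hk
            rw [g, if_neg (by omega), if_neg (by omega)]
          have hz : btw (ltr w s) b (ltr w 0) = 0 :=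
            btw_eq_zero_of_not fun h => slt_asymm h1 h.1
          rw [if_pos h1, btw_eq_one h1 h2, ih (by omega) (swp w s) hw' (by rwa [g0]),
            Finset.sum_Ico_succ_top hs1, g0, gs, hsum', hz, add_zero]
          · exact telescope hsum.symm
          · rw [g0]
            rcases hb with hb | ⟨q, h3, h4, hb⟩ | ⟨q, h3, h4, hb⟩
            · exact Or.inr (Or.inl ⟨s, hps, hsn, by rw [gs]; exact hb⟩)
            · rcases eq_or_ne q s with rfl | hne
              · exact Or.inl hb
              · refine Or.inr (Or.inl ⟨q, h3, h4, ?_⟩)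
                rw [g, if_neg (by omega), if_neg hne]
                exact hb
            · have hne : q ≠ s := by rintro rfl; exact hbs hb
              refine Or.inr (Or.inr ⟨q, by omega, h4, ?_⟩)
              rw [g, if_neg (by omega), if_neg hne]
              exact hb
        · rw [btw_eq_zero_of_not hc, add_zero]
          split_ifs with h1
          · rw [pathSum_eq_zero hn b _ _ hw' hI, mul_zero, add_zero]
            rw [g0]
            rintro (h | h)
            · exact hc ⟨h1, h⟩
            · exact hbs h.symm
          · rw [add_zero]
      · rcases hb with hb | hb | ⟨q, h3, h4, hb⟩
        · exact Or.inl hb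
        · exact Or.inr (Or.inl hb)
        · have hne : q ≠ s := by rintro rfl; exact hbs hb
          exact Or.inr (Or.inr ⟨q, by omega, h4, hb⟩)

end

/-! ### Windows and the statistic `N_{ab}` -/

lemma good_of_mem {n : ℕ} {w : List ℤ} (hw : w ∈ allWindows n) : Good n w := by
  simp only [allWindows, Finset.mem_image, Finset.mem_univ, true_and] at hw
  obtain ⟨⟨σ, ε⟩, rfl⟩ := hw
  have hl : ∀ i (hi : i < n), ltr ((List.finRange n).map (fun i =>
      if ε i then -(((σ i : ℕ) : ℤ) + 1) else ((σ i : ℕ) : ℤ) + 1)) i =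
      if ε ⟨i, hi⟩ then -(((σ ⟨i, hi⟩ : ℕ) : ℤ) + 1) else ((σ ⟨i, hi⟩ : ℕ) : ℤ) + 1 := by
    intro i hi
    simp [ltr, hi]
  refine ⟨by simp, fun i hi => ?_, fun i hi j hj hij => ?_⟩
  · rw [hl i hi]
    split_ifs <;> omega
  · rw [hl i hi, hl j hj]
    have : (σ ⟨i, hi⟩ : ℕ) ≠ σ ⟨j, hj⟩ := by
      intro h
      exact hij (Fin.mk.inj_iff.1 (σ.injective (Fin.ext h)))
    split_ifs <;> omega

lemma Nab_word (a b : ℤ) (w : List ℤ) (p : ℕ) (hp : p + 1 ≤ w.length) :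
    Nab a b (word w 2 (p + 1)) = ∑ k ∈ Finset.Ico 1 (p + 1), btw a b (ltr w k) := by
  have e : ∀ p, word w 2 (p + 1) = (w.drop 1).take p := fun _ => rfl
  induction p with
  | zero => simp [e, Nab]
  | succ p ih =>
    have hlt : p < (w.drop 1).length := by rw [List.length_drop]; omega
    rw [Finset.sum_Ico_succ_top (by omega), ← ih (by omega), e, e, List.take_add_one,
      List.getElem?_eq_getElem hlt]
    have h2 : (w.drop 1)[p] = ltr w (p + 1) := by
      simp [ltr, List.getD_eq_getElem?_getD, add_comm p 1,
        List.getElem?_eq_getElem (by omega : 1 + p < w.length)]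
    rw [h2]
    by_cases h : slt a (ltr w (p + 1)) ∧ slt (ltr w (p + 1)) b
    · simp [Nab, List.filter_append, btw, h]
    · rw [btw, if_neg h]
      simp only [Nab, List.filter_append, Option.toList, List.length_append, List.filter_cons, h,
        decide_false, List.filter_nil]
      rfl

/-- Proposition 6.3: for `w ∈ B_n`, `a = w(1)`, `1 ≤ p ≤ n`,
and `b ∈ {±a} ∪ {±w(q) : p < q ≤ n}` with `a ⪯ b`, summing over all
increasing-admissible subsequences `T` of `Δ` with `(wT)(1) = b` gives
`t^{N_{ab}(w[2,p])} (1-t)^{1-δ_{ab}}`. -/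
theorem delta_sum (n : ℕ) (w : List ℤ) (hw : w ∈ allWindows n)
    (p : ℕ) (hp1 : 1 ≤ p) (hp2 : p ≤ n) (b : ℤ)
    (hb : b = w.getD 0 0 ∨ b = -(w.getD 0 0) ∨
      ∃ q, p < q ∧ q ≤ n ∧ (b = w.getD (q - 1) 0 ∨ b = -(w.getD (q - 1) 0)))
    (hab : sle (w.getD 0 0) b) :
    (∑ᶠ (J : Finset ℕ) (_ : J ⊆ Finset.range (deltaChain n p).length ∧
        incChain w (selChain (deltaChain n p) J) = true ∧
        (applyAll w (selChain (deltaChain n p) J)).getD 0 0 = b),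
      (Polynomial.X : Polynomial ℤ) ^
          ((len (applyAll w (selChain (deltaChain n p) J)) - len w - J.card) / 2) *
        (1 - Polynomial.X) ^ J.card)
      = (Polynomial.X : Polynomial ℤ) ^ (Nab (w.getD 0 0) b (word w 2 p)) *
          (1 - Polynomial.X) ^ (if w.getD 0 0 = b then 0 else 1) := by
  have hg := good_of_mem hw
  have hn : 0 < n := by omega
  have hI : ∀ t ∈ deltaChain n p, IsRefl n t := by
    rw [deltaChain_eq]
    exact isRefl_pos hp1 le_rfl
  rw [finsum_eq_pathSum hn hg b _ hI]
  change pathSum (deltaChain n p) w b = _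
  obtain ⟨p, rfl⟩ : ∃ p', p = p' + 1 := ⟨p - 1, by omega⟩
  rw [Nab_word _ _ _ _ (by rw [hg.1]; exact hp2)]
  change sle (ltr w 0) b at hab
  change _ = X ^ (∑ k ∈ Finset.Ico 1 (p + 1), btw (ltr w 0) b (ltr w k)) *
    (1 - X) ^ (if ltr w 0 = b then 0 else 1)
  rcases eq_or_ne (ltr w 0) b with h | h
  · subst h
    have hz : ∀ c, btw (ltr w 0) (ltr w 0) c = 0 := fun c =>
      btw_eq_zero_of_not fun h => slt_asymm h.1 h.2
    rw [pathSum_self hn _ _ hg hI]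
    simp [hz]
  · rw [if_neg h, pow_one, deltaChain_eq, mul_comm]
    refine pathSum_pos hp1 hp2 le_rfl w hg (hab.resolve_right h) ?_
    rcases hb with hb | hb | ⟨q, h1, h2, hb | hb⟩
    · exact absurd hb.symm h
    · exact Or.inl hb
    · exact Or.inr (Or.inr ⟨q - 1, by omega, by omega, hb⟩)
    · exact Or.inr (Or.inl ⟨q - 1, by omega, by omega, hb⟩)

end HL
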